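/- arXiv:2505.01093 — 2 statements merged into one kernel-verified Lean document; each statement's English description precedes it below -/
import Mathlib

section
/- For a positive integer n coprime to a prime N, and a negative fundamental discriminant -D < 0, the number of representations of n by reduced positive definite binary quadratic forms of discriminant -D equals 2·u_D times the sum over divisors d of n of χ_{-D}(d), where χ_{-D} is the Kronecker symbol of discriminant -D and u_D is the number of units of the ring of integers of Q(√-D) divided by 2. -/
/-!
A positive definite form `f` of discriminant `-D` together with a vector `v ≠ 0` with `f(v) = n` can
be described as follows. Let `e` be the content of `v`, so `e² ∣ n`; complete `v / e` to a basis of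
`ℤ²`. In that basis `f` becomes `(m, b, c)` with `m = n / e²`, and `b` is determined modulo `2m`.
Writing `-D = t² - 4q` as the discriminant of `X² + tX + q`, the coefficient `b = 2x + t` amounts to
a root `x` of this polynomial modulo `m`. Conversely, every pair `(e, x)` gives a form
`(m, 2x + t, c)`, which is equivalent to exactly one reduced form (`exists_act_isReducedForm`,
`reduced_unique`). The vectors giving the same pair `(e, x)` are permuted simply transitively by the
automorphs of `(m, 2x + t, c)`. Because the discriminant is fundamental, that form is primitive
(`primitive`), so its automorphs correspond to the norm-one elements `X + s ω` of the order `ℤ[ω]`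
with `ω² = tω - q` (`exists_automorph`), which are the units of `𝓞 K` (`units_equiv`). Therefore
(`card_representations`) the number of representations is `#(𝓞 K)ˣ` times `∑_{e² ∣ n} ρ(n / e²)`,
where `ρ(m)` is the number of roots modulo `m`.

The function `ρ` is multiplicative. At an unramified prime, Hensel's lemma gives
`ρ(p^k) = 1 + χ(p)` for `k ≥ 1`; at a prime dividing `D` one has `ρ(p) = 1` and `ρ(p^k) = 0` for
`k ≥ 2`, again because the discriminant is fundamental. Comparing at prime powers,
`∑_{e² ∣ n} ρ(n / e²) = ∑_{d ∣ n} χ(d)` (`sum_rootCount`). Finally `#(𝓞 K)ˣ` is even, so it equals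
`2 u_D`.

Fundamentality is used only through the hypothesis `key`: if `p ∣ D` then `p²` does not divide any
value of `X² + tX + q` (`exists_polynomial`).
-/

open Finset NumberField

/-- The Kronecker symbol `(a|p)` at a prime `p`. -/
def kroneckerPrime (a : ℤ) (p : ℕ) : ℤ :=
  if p = 2 then (if a % 2 = 0 then 0 else if a % 8 = 1 ∨ a % 8 = 7 then 1 else -1)
  else jacobiSym a p

/-- The Kronecker symbol `(a|n)` for `n ≥ 1`, extended multiplicatively from primes. -/
def kronecker (a : ℤ) (n : ℕ) : ℤ :=
  n.factorization.prod fun p k => (kroneckerPrime a p) ^ k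

/-- `d` is a fundamental discriminant. -/
def IsFundamentalDiscriminant (d : ℤ) : Prop :=
  (d % 4 = 1 ∧ Squarefree d) ∨
    (d % 4 = 0 ∧ Squarefree (d / 4) ∧ (d / 4 % 4 = 2 ∨ d / 4 % 4 = 3))

/-- `(a, b, c)` is a reduced positive definite binary quadratic form of discriminant `d`. -/
def IsReducedForm (d : ℤ) (f : ℤ × ℤ × ℤ) : Prop :=
  f.2.1 ^ 2 - 4 * f.1 * f.2.2 = d ∧ 0 < f.1 ∧ |f.2.1| ≤ f.1 ∧ f.1 ≤ f.2.2 ∧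
    ((|f.2.1| = f.1 ∨ f.1 = f.2.2) → 0 ≤ f.2.1)

/-- `r_D(n)`: the total number of representations of `n` by the reduced positive definite
binary quadratic forms of discriminant `-D`, counted over all classes. -/
noncomputable def repCount (D : ℤ) (n : ℕ) : ℕ :=
  Nat.card {x : (ℤ × ℤ × ℤ) × ℤ × ℤ //
    IsReducedForm (-D) x.1 ∧
      x.1.1 * x.2.1 ^ 2 + x.1.2.1 * x.2.1 * x.2.2 + x.1.2.2 * x.2.2 ^ 2 = n}

/-! ### Units of the ring of integers as norm-one elements -/

/-- If `r / h` is in lowest terms and `D (r / h)² = 4 - T²` with `T` integral, then `r / h` is an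
integer. Applied to the `ω`-coordinate of an element of trace `T` and norm one, where
`ω² = tω - q`; this is where maximality of the order `ℤ[ω]` enters. -/
lemma int_of_relation {D t q : ℤ} (hD : D = 4 * q - t ^ 2)
    (key : ∀ p : ℕ, p.Prime → (p : ℤ) ∣ D → ∀ x : ℤ, ¬ (p : ℤ) ^ 2 ∣ x ^ 2 + t * x + q)
    {T r h : ℤ} (hrh : IsCoprime r h) (h0 : D * r ^ 2 = (4 - T ^ 2) * h ^ 2) : IsUnit h := by
  by_contra hu
  have hne : h.natAbs ≠ 1 := fun e => hu (Int.isUnit_iff_natAbs_eq.2 e)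
  obtain ⟨p, hp, hph⟩ := Nat.exists_prime_and_dvd hne
  have hpz : Prime (p : ℤ) := Nat.prime_iff_prime_int.1 hp
  have hph' : (p : ℤ) ∣ h := Int.natCast_dvd.2 hph
  have hpr : IsCoprime ((p : ℤ) ^ 2) (r ^ 2) :=
    ((hrh.of_isCoprime_of_dvd_right hph').symm).pow
  have hp2D : (p : ℤ) ^ 2 ∣ D :=
    hpr.dvd_of_dvd_mul_right (h0 ▸ ((pow_dvd_pow_of_dvd hph' 2).mul_left _))
  have hpD : (p : ℤ) ∣ D := (dvd_pow_self _ two_ne_zero).trans hp2D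
  rcases eq_or_ne p 2 with rfl | h2
  · -- here `4 ∣ D`, so `t` is even and `T * (h / 2) - t / 2` contradicts `key`
    obtain ⟨k, rfl⟩ := hph'
    obtain ⟨E, hE⟩ := hp2D
    have ht : (2 : ℤ) ∣ t := by
      refine Int.prime_two.dvd_of_dvd_pow (n := 2) ⟨2 * q - 2 * E, ?_⟩
      push_cast at hE
      linarith
    obtain ⟨t', rfl⟩ := ht
    have hr : r % 2 = 1 := by
      rcases Int.emod_two_eq_zero_or_one r with h' | h'
      · exfalso
        have := hrh.isUnit_of_dvd' (Int.dvd_of_emod_eq_zero h') (dvd_mul_right _ _)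
        revert this; decide
      · exact h'
    have hr4 : ∃ m, r ^ 2 = 4 * m + 1 := by
      obtain ⟨m, hm⟩ : ∃ m, r = 2 * m + 1 := ⟨r / 2, by omega⟩
      exact ⟨m ^ 2 + m, by rw [hm]; ring⟩
    obtain ⟨m, hm⟩ := hr4
    apply key 2 hp hpD (T * k - t')
    push_cast at *
    have hE' : E = q - t' ^ 2 := by linarith
    have h1 : E * r ^ 2 = (4 - T ^ 2) * k ^ 2 := by
      have : (4 : ℤ) * (E * r ^ 2) = 4 * ((4 - T ^ 2) * k ^ 2) := by
        rw [hE] at h0; linarith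
      linarith
    refine ⟨k ^ 2 - E * m, ?_⟩
    rw [hm] at h1
    linear_combination h1 - hE'
  · -- for odd `p`, halve modulo `p ^ 2`: the root `x = -t / 2` contradicts `key`
    have hodd : p % 2 = 1 := hp.eq_two_or_odd.resolve_left h2
    obtain ⟨j, hj⟩ : ∃ j : ℤ, (p : ℤ) ^ 2 = 2 * j + 1 := by
      obtain ⟨i, hi⟩ : ∃ i : ℕ, p = 2 * i + 1 := ⟨p / 2, by omega⟩
      exact ⟨2 * i ^ 2 + 2 * i, by rw [hi]; push_cast; ring⟩
    apply key p hp hpD (t * j)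
    have hc : IsCoprime ((p : ℤ) ^ 2) (4 : ℤ) := ⟨1 - 2 * j, j ^ 2, by rw [hj]; ring⟩
    refine hc.dvd_of_dvd_mul_left ?_
    have : 4 * ((t * j) ^ 2 + t * (t * j) + q) = D + (p : ℤ) ^ 2 * (p ^ 2 * t ^ 2) := by
      rw [hj, hD]; ring
    rw [this]
    exact dvd_add hp2D (dvd_mul_right _ _)

open QuadraticAlgebra in
/-- In a quadratic field over `ℚ`, the trace and norm of an integral element are integers, being
integral and rational. -/
lemma exists_int_of_isIntegral {q t : ℚ} [Fact (∀ r : ℚ, r ^ 2 ≠ -q + t * r)]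
    {z : QuadraticAlgebra ℚ (-q) t} (hz : IsIntegral ℤ z) :
    (∃ T : ℤ, trace z = T) ∧ ∃ M : ℤ, norm z = M := by
  have hs : IsIntegral ℤ (star z) :=
    map_isIntegral_int (starRingEnd (QuadraticAlgebra ℚ (-q) t)) hz
  have desc : ∀ r : ℚ, IsIntegral ℤ (⟨r, 0⟩ : QuadraticAlgebra ℚ (-q) t) →
      ∃ T : ℤ, r = T := by
    intro r hr
    have hC : algebraMap ℚ (QuadraticAlgebra ℚ (-q) t) r = ⟨r, 0⟩ := rfl
    rw [← hC] at hr
    have := (isIntegral_algebraMap_iff (algebraMap ℚ (QuadraticAlgebra ℚ (-q) t)).injective).1 hr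
    obtain ⟨T, hT⟩ := IsIntegrallyClosed.isIntegral_iff.1 this
    exact ⟨T, by simpa using hT.symm⟩
  have h1 : (⟨trace z, 0⟩ : QuadraticAlgebra ℚ (-q) t) = z + star z := by
    ext <;> simp [trace_def]; ring
  have h2 : (⟨norm z, 0⟩ : QuadraticAlgebra ℚ (-q) t) = z * star z := by
    ext <;> simp [norm_def] <;> ring
  exact ⟨desc _ (h1 ▸ hz.add hs), desc _ (h2 ▸ hz.mul hs)⟩

open QuadraticAlgebra in
/-- The units of `𝓞 K` are the elements `X + s ω` with `X, s ∈ ℤ` of norm one, where `ω² = tω - q`.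
The field `K` is identified with `QuadraticAlgebra ℚ (-q) t` by `ω ↦ (t + α) / 2`. -/
theorem units_equiv {D t q : ℤ} (hDpos : 0 < D) (hD : D = 4 * q - t ^ 2)
    (key : ∀ p : ℕ, p.Prime → (p : ℤ) ∣ D → ∀ x : ℤ, ¬ (p : ℤ) ^ 2 ∣ x ^ 2 + t * x + q)
    (K : Type) [Field K] [NumberField K]
    (hdeg : Module.finrank ℚ K = 2) (hα : ∃ α : K, α ^ 2 = ((-D : ℤ) : K)) :
    Nonempty ((𝓞 K)ˣ ≃ {u : ℤ × ℤ // u.1 ^ 2 + t * u.1 * u.2 + q * u.2 ^ 2 = 1}) := by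
  obtain ⟨α, hα⟩ := hα
  have hDq : (D : ℚ) = 4 * q - t ^ 2 := by exact_mod_cast hD
  have hDK : (D : K) = 4 * q - t ^ 2 := by exact_mod_cast congrArg (Int.cast : ℤ → K) hD
  have hDq0 : (0 : ℚ) < D := by exact_mod_cast hDpos
  have : Fact (∀ r : ℚ, r ^ 2 ≠ -(q : ℚ) + (t : ℚ) * r) := ⟨fun r hr => by
    nlinarith [sq_nonneg (2 * r - t)]⟩
  let w : K := (t + α) / 2
  have hw : w * w = (-(q : ℚ)) • (1 : K) + (t : ℚ) • w := by
    simp only [Algebra.smul_def, w]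
    push_cast at hα
    simp only [map_neg, map_intCast]
    linear_combination (1 / 4 : K) * hα - (1/4 : K) * hDK
  let φ : QuadraticAlgebra ℚ (-(q : ℚ)) (t : ℚ) →ₐ[ℚ] K := QuadraticAlgebra.lift ⟨w, hw⟩
  have hφinj : Function.Injective φ := φ.toRingHom.injective
  have hφbij : Function.Bijective φ := by
    refine ⟨hφinj, ?_⟩
    have := (LinearMap.injective_iff_surjective_of_finrank_eq_finrank
      (f := φ.toLinearMap) (by rw [hdeg]; exact QuadraticAlgebra.finrank_eq_two _ _)).1 hφinj
    exact this
  let e : QuadraticAlgebra ℚ (-(q : ℚ)) (t : ℚ) ≃ₐ[ℚ] K := AlgEquiv.ofBijective φ hφbij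
  -- integrality of elements with integral coordinates
  have hint : ∀ X s : ℤ, IsIntegral ℤ (⟨X, s⟩ : QuadraticAlgebra ℚ (-(q : ℚ)) (t : ℚ)) := by
    intro X s
    refine ⟨Polynomial.X ^ 2 - Polynomial.C (2 * X + t * s) * Polynomial.X
      + Polynomial.C (X ^ 2 + t * X * s + q * s ^ 2), by monicity!, ?_⟩
    have hm : ∀ m : ℤ, (m : QuadraticAlgebra ℚ (-(q : ℚ)) (t : ℚ)) = ⟨m, 0⟩ := fun m => by ext <;> simp
    simp only [Polynomial.eval₂_add, Polynomial.eval₂_sub, Polynomial.eval₂_mul,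
      Polynomial.eval₂_pow, Polynomial.eval₂_X, Polynomial.eval₂_C]
    simp only [eq_intCast, hm]
    ext <;> simp [pow_two] <;> ring
  -- coordinates of units
  have hcoord : ∀ z : QuadraticAlgebra ℚ (-(q : ℚ)) (t : ℚ), IsIntegral ℤ z →
      norm z = 1 → ∃ X s : ℤ, z = ⟨X, s⟩ := by
    intro z hz hn
    obtain ⟨⟨T, hT⟩, -⟩ := exists_int_of_isIntegral hz
    rw [norm_def] at hn
    rw [trace_def] at hT
    have hrel : (D : ℚ) * z.im ^ 2 = 4 - (T : ℚ) ^ 2 := by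
      rw [← hT, hDq]; linear_combination 4 * hn
    have hs : ∃ s : ℤ, z.im = s := by
      have hcop : IsCoprime z.im.num (z.im.den : ℤ) := by
        rw [Int.isCoprime_iff_nat_coprime]; simpa using z.im.reduced
      have hden : (z.im.den : ℚ) ≠ 0 := by exact_mod_cast z.im.den_nz
      have h0 : D * z.im.num ^ 2 = (4 - T ^ 2) * (z.im.den : ℤ) ^ 2 := by
        have : (D : ℚ) * z.im.num ^ 2 = (4 - T ^ 2) * (z.im.den : ℚ) ^ 2 := by
          rw [← hrel]
          conv_rhs => rw [← Rat.num_div_den z.im]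
          rw [Rat.num_div_den]
          field_simp
          rw [← mul_pow, Rat.mul_den_eq_num]
        exact_mod_cast this
      have hu := int_of_relation hD key hcop h0
      have : z.im.den = 1 := by
        rw [Int.isUnit_iff_natAbs_eq] at hu; simpa using hu
      exact ⟨z.im.num, (Rat.coe_int_num_of_den_eq_one this).symm⟩
    obtain ⟨s, hs⟩ := hs
    have hX : ∃ X : ℤ, z.re = X := by
      have : IsIntegral ℤ z.re := by
        refine ⟨Polynomial.X ^ 2 + Polynomial.C (t * s) * Polynomial.X
          + Polynomial.C (q * s ^ 2 - 1), by monicity!, ?_⟩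
        simp only [Polynomial.eval₂_add, Polynomial.eval₂_mul,
          Polynomial.eval₂_pow, Polynomial.eval₂_X, Polynomial.eval₂_C]
        simp only [eq_intCast]
        push_cast
        rw [← hs]
        linear_combination hn
      obtain ⟨T, hT⟩ := IsIntegrallyClosed.isIntegral_iff.1 this
      exact ⟨T, by simpa using hT.symm⟩
    obtain ⟨X, hX⟩ := hX
    exact ⟨X, s, by ext <;> simp [hX, hs]⟩
  -- a unit has norm `±1`, and the norm form is positive definite
  have hnorm1 : ∀ z w : QuadraticAlgebra ℚ (-(q : ℚ)) (t : ℚ), IsIntegral ℤ z →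
      IsIntegral ℤ w → z * w = 1 → norm z = 1 := by
    intro z w hz hw hzw
    obtain ⟨-, M, hM⟩ := exists_int_of_isIntegral hz
    obtain ⟨-, M', hM'⟩ := exists_int_of_isIntegral hw
    have h1 : norm z * norm w = 1 := by rw [← map_mul, hzw, map_one]
    have hpos : 0 ≤ norm z := by
      rw [norm_def]
      nlinarith [sq_nonneg (2 * z.re + t * z.im), mul_nonneg hDq0.le (sq_nonneg z.im)]
    rw [hM] at hpos ⊢
    rw [hM, hM'] at h1
    have h2 : M * M' = 1 := by exact_mod_cast h1
    have h3 : 0 ≤ M := by exact_mod_cast hpos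
    rw [Int.eq_one_of_mul_eq_one_right h3 h2]; simp
  let f : {u : ℤ × ℤ // u.1 ^ 2 + t * u.1 * u.2 + q * u.2 ^ 2 = 1} → (𝓞 K)ˣ := fun u =>
    { val := ⟨φ ⟨u.1.1, u.1.2⟩, (hint _ _).map (φ.restrictScalars ℤ)⟩
      inv := ⟨φ ⟨(u.1.1 + t * u.1.2 : ℤ), (-u.1.2 : ℤ)⟩, (hint _ _).map (φ.restrictScalars ℤ)⟩
      val_inv := by
        apply RingOfIntegers.ext
        have h : ((u.1.1 : ℚ)) ^ 2 + t * u.1.1 * u.1.2 + q * u.1.2 ^ 2 = 1 := by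
          exact_mod_cast u.2
        change φ _ * φ _ = 1
        rw [← map_mul, ← map_one φ]
        congr 1
        ext <;> simp
        · linear_combination h
        · ring
      inv_val := by
        apply RingOfIntegers.ext
        have h : ((u.1.1 : ℚ)) ^ 2 + t * u.1.1 * u.1.2 + q * u.1.2 ^ 2 = 1 := by
          exact_mod_cast u.2
        change φ _ * φ _ = 1
        rw [← map_mul, ← map_one φ]
        congr 1
        ext <;> simp
        · linear_combination h
        · ring }
  refine ⟨(Equiv.ofBijective f ⟨?_, ?_⟩).symm⟩
  · intro u v huv
    have h1 : φ ⟨u.1.1, u.1.2⟩ = φ ⟨v.1.1, v.1.2⟩ :=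
      congrArg (fun y : (𝓞 K)ˣ => ((y : 𝓞 K) : K)) huv
    have h2 := hφinj h1
    simp only [QuadraticAlgebra.mk.injEq, Int.cast_inj] at h2
    exact Subtype.ext (Prod.ext h2.1 h2.2)
  · intro y
    have hy : ∀ y : 𝓞 K, IsIntegral ℤ (e.symm y) := fun y =>
      (RingOfIntegers.isIntegral_coe y).map (e.symm.toAlgHom.restrictScalars ℤ)
    have hn := hnorm1 (e.symm (y : 𝓞 K)) (e.symm ((y⁻¹ : (𝓞 K)ˣ) : 𝓞 K)) (hy _) (hy _) (by
      rw [← map_mul, ← map_mul]; simp)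
    obtain ⟨X, s, hXs⟩ := hcoord _ (hy _) hn
    refine ⟨⟨(X, s), ?_⟩, ?_⟩
    · rw [hXs, norm_def] at hn
      have : (X : ℚ) ^ 2 + t * X * s + q * s ^ 2 = 1 := by linear_combination hn
      exact_mod_cast this
    · apply Units.ext
      apply RingOfIntegers.ext
      change e ⟨X, s⟩ = _
      rw [← hXs, AlgEquiv.apply_symm_apply]

/-- The unit `-1` has order two. (If the group were infinite, `Nat.card` would be `0`.) -/
lemma even_card_units (K : Type) [Field K] [NumberField K] :
    2 * (Nat.card (𝓞 K)ˣ / 2) = Nat.card (𝓞 K)ˣ := by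
  apply Nat.mul_div_cancel'
  have h : orderOf (-1 : (𝓞 K)ˣ) = 2 := by
    rw [orderOf_eq_prime_iff]
    refine ⟨by simp, fun h => ?_⟩
    have h1 : (-1 : 𝓞 K) = 1 := by simpa using congrArg Units.val h
    have h2 : (2 : 𝓞 K) = 0 := by linear_combination -h1
    exact two_ne_zero h2
  exact h ▸ orderOf_dvd_natCard _

/-! ### Roots modulo `m` and divisor sums of the Kronecker symbol -/

/-- The number of roots of `X ^ 2 + t X + q` modulo `m`. -/
noncomputable def rootCount (t q : ℤ) (m : ℕ) : ℕ :=
  Nat.card {x : ZMod m // x ^ 2 + (t : ZMod m) * x + (q : ZMod m) = 0}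

lemma kronecker_one (a : ℤ) : kronecker a 1 = 1 := by simp [kronecker]

lemma kronecker_mul (a : ℤ) {m n : ℕ} (hm : m ≠ 0) (hn : n ≠ 0) :
    kronecker a (m * n) = kronecker a m * kronecker a n := by
  unfold kronecker
  rw [Nat.factorization_mul hm hn]
  exact Finsupp.prod_add_index' (fun _ => pow_zero _) (fun _ _ _ => pow_add _ _ _)

lemma kronecker_prime_pow (a : ℤ) {p : ℕ} (hp : p.Prime) (k : ℕ) :
    kronecker a (p ^ k) = kroneckerPrime a p ^ k := by
  unfold kronecker
  rw [hp.factorization_pow]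
  exact Finsupp.prod_single_index (pow_zero _)

lemma rootCount_one (t q : ℤ) : rootCount t q 1 = 1 := by
  unfold rootCount
  rw [Nat.card_eq_one_iff_unique]
  exact ⟨inferInstance, ⟨⟨0, Subsingleton.elim _ _⟩⟩⟩

lemma rootCount_mul (t q : ℤ) {m n : ℕ} (h : m.Coprime n) :
    rootCount t q (m * n) = rootCount t q m * rootCount t q n := by
  unfold rootCount
  rw [← Nat.card_prod]
  let e := ZMod.chineseRemainder h
  refine Nat.card_congr ((e.toEquiv.subtypeEquiv
    (q := fun y : ZMod m × ZMod n => (y.1 ^ 2 + (t : ZMod m) * y.1 + (q : ZMod m) = 0) ∧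
      (y.2 ^ 2 + (t : ZMod n) * y.2 + (q : ZMod n) = 0)) ?_).trans
    (Equiv.subtypeProdEquivProd (p := fun x : ZMod m => x ^ 2 + (t : ZMod m) * x + (q : ZMod m) = 0)
      (q := fun x : ZMod n => x ^ 2 + (t : ZMod n) * x + (q : ZMod n) = 0)))
  intro x
  rw [← map_eq_zero_iff e e.injective]
  simp [Prod.ext_iff]

/-- For `p ∤ D` the roots modulo `p` are simple, so Hensel lifting applies. -/
lemma rootCount_prime_pow_succ {D t q : ℤ} (hD : D = 4 * q - t ^ 2) {p : ℕ} (hp : p.Prime)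
    (hpD : ¬ (p : ℤ) ∣ D) {k : ℕ} (hk : k ≠ 0) :
    rootCount t q (p ^ (k + 1)) = rootCount t q (p ^ k) := by
  have hpz : Prime (p : ℤ) := Nat.prime_iff_prime_int.1 hp
  have hdvd : p ^ k ∣ p ^ (k + 1) := pow_dvd_pow _ (Nat.le_succ k)
  have hroot : ∀ (m : ℕ) (x : ℤ),
      (x : ZMod m) ^ 2 + (t : ZMod m) * x + (q : ZMod m) = 0 ↔ (m : ℤ) ∣ x ^ 2 + t * x + q := by
    intro m x
    rw [← ZMod.intCast_zmod_eq_zero_iff_dvd]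
    push_cast
    rfl
  have hp_pk : (p : ℤ) ∣ (p : ℤ) ^ k := dvd_pow_self _ hk
  -- the derivative is a unit at a root, its square being `-D` modulo `p`
  have hder : ∀ x : ℤ, (p : ℤ) ∣ x ^ 2 + t * x + q → IsCoprime (p : ℤ) (2 * x + t) := by
    intro x hx
    refine hpz.coprime_iff_not_dvd.2 fun h => hpD ?_
    have : D = 4 * (x ^ 2 + t * x + q) - (2 * x + t) * (2 * x + t) := by rw [hD]; ring
    rw [this]
    exact dvd_sub (hx.mul_left _) (h.mul_left _)
  let φ := ZMod.castHom hdvd (ZMod (p ^ k))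
  let f : {x : ZMod (p ^ (k + 1)) //
      x ^ 2 + (t : ZMod (p ^ (k + 1))) * x + (q : ZMod (p ^ (k + 1))) = 0} →
      {x : ZMod (p ^ k) // x ^ 2 + (t : ZMod (p ^ k)) * x + (q : ZMod (p ^ k)) = 0} :=
    fun x => ⟨φ x.1, by simpa using congrArg φ x.2⟩
  refine Nat.card_congr (Equiv.ofBijective f ⟨?_, ?_⟩)
  · rintro ⟨x, hx⟩ ⟨y, hy⟩ hxy
    obtain ⟨x, rfl⟩ := ZMod.intCast_surjective x
    obtain ⟨y, rfl⟩ := ZMod.intCast_surjective y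
    rw [hroot] at hx hy
    have h1 : φ (x : ZMod (p ^ (k + 1))) = φ (y : ZMod (p ^ (k + 1))) := congrArg Subtype.val hxy
    simp only [map_intCast] at h1
    rw [ZMod.intCast_eq_intCast_iff_dvd_sub] at h1
    apply Subtype.ext
    change (x : ZMod (p ^ (k + 1))) = y
    rw [ZMod.intCast_eq_intCast_iff_dvd_sub]
    push_cast at *
    have hpx : (p : ℤ) ∣ x ^ 2 + t * x + q :=
      (dvd_pow_self _ (Nat.succ_ne_zero k)).trans hx
    have hc : IsCoprime (p : ℤ) (x + y + t) := by
      obtain ⟨c, hc⟩ := hp_pk.trans h1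
      have : x + y + t = (2 * x + t) + p * c := by linear_combination hc
      rw [this]
      exact IsCoprime.add_mul_left_right (hder x hpx) c
    refine (hc.pow_left (m := k + 1)).dvd_of_dvd_mul_right ?_
    have : (y - x) * (x + y + t) = (y ^ 2 + t * y + q) - (x ^ 2 + t * x + q) := by ring
    rw [this]
    exact dvd_sub hy hx
  · rintro ⟨x, hx⟩
    obtain ⟨x, rfl⟩ := ZMod.intCast_surjective x
    rw [hroot] at hx
    push_cast at hx
    obtain ⟨a, b, hab⟩ := hder x (hp_pk.trans hx)
    obtain ⟨s, hs⟩ := hx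
    refine ⟨⟨((x + p ^ k * (-s * b) : ℤ) : ZMod (p ^ (k + 1))), ?_⟩, ?_⟩
    · rw [hroot]
      obtain ⟨c, hc⟩ := hp_pk
      refine ⟨s * a + (s * b) ^ 2 * c, ?_⟩
      push_cast
      rw [pow_succ]
      have h2 : (p : ℤ) ^ k * p ^ k = p ^ k * (p * c) := by rw [← hc]
      linear_combination hs - (p : ℤ) ^ k * s * hab + (s * b) ^ 2 * h2
    · apply Subtype.ext
      change φ _ = _
      rw [map_intCast, ZMod.intCast_eq_intCast_iff_dvd_sub]
      exact ⟨s * b, by push_cast; ring⟩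

/-- For `p ∣ D` there are no roots modulo `p²`, hence none modulo higher powers. -/
lemma rootCount_ramified {t q : ℤ} {p : ℕ}
    (key : ∀ x : ℤ, ¬ (p : ℤ) ^ 2 ∣ x ^ 2 + t * x + q) (k : ℕ) :
    rootCount t q (p ^ (k + 2)) = 0 := by
  unfold rootCount
  rw [Nat.card_eq_zero]
  left
  constructor
  rintro ⟨x, hx⟩
  obtain ⟨x, rfl⟩ := ZMod.intCast_surjective x
  apply key x
  have h : ((x ^ 2 + t * x + q : ℤ) : ZMod (p ^ (k + 2))) = 0 := by push_cast; exact hx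
  rw [ZMod.intCast_zmod_eq_zero_iff_dvd] at h
  push_cast at h
  exact (pow_dvd_pow _ (by omega)).trans h

/-- A quadratic polynomial of discriminant `-D` has `1 + (-D|p)` roots modulo `p`. -/
lemma rootCount_prime {D t q : ℤ} (hD : D = 4 * q - t ^ 2) {p : ℕ} (hp : p.Prime) :
    (rootCount t q p : ℤ) = 1 + kroneckerPrime (-D) p := by
  rcases eq_or_ne p 2 with rfl | h2
  · have hk : kroneckerPrime (-D) 2 =
        if t % 2 = 0 then 0 else if q % 2 = 0 then 1 else -1 := by
      rcases Int.even_or_odd' t with ⟨s, rfl | rfl⟩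
      · have h1 : (-D) % 2 = 0 := by
          have : D = 2 * (2 * q - 2 * s ^ 2) := by rw [hD]; ring
          omega
        have h2 : (2 * s) % 2 = 0 := by omega
        simp [kroneckerPrime, h1]
      · have hs : (s * (s + 1)) % 2 = 0 := by
          have := Int.even_mul_succ_self s
          exact Int.even_iff.1 this
        have h3 : D = 4 * q - 4 * (s * (s + 1)) - 1 := by rw [hD]; ring
        have h2 : ¬ (2 * s + 1) % 2 = 0 := by omega
        have h1 : ¬ (-D) % 2 = 0 := by omega
        simp only [kroneckerPrime, if_true, if_neg h1, if_neg h2]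
        by_cases hq : q % 2 = 0
        · rw [if_pos hq, if_pos (by omega)]
        · rw [if_neg hq, if_neg (by omega)]
    rw [hk]
    have ht : (t : ZMod 2) = 0 ∧ t % 2 = 0 ∨ (t : ZMod 2) = 1 ∧ ¬ t % 2 = 0 := by
      rcases Int.even_or_odd t with h | h
      · exact Or.inl ⟨(ZMod.intCast_zmod_eq_zero_iff_dvd t 2).2 (by exact_mod_cast h.two_dvd),
          Int.even_iff.1 h⟩
      · refine Or.inr ⟨?_, by have := Int.odd_iff.1 h; omega⟩
        obtain ⟨s, rfl⟩ := h
        push_cast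
        rw [show (2 : ZMod 2) = 0 from rfl]; simp
    have hq : (q : ZMod 2) = 0 ∧ q % 2 = 0 ∨ (q : ZMod 2) = 1 ∧ ¬ q % 2 = 0 := by
      rcases Int.even_or_odd q with h | h
      · exact Or.inl ⟨(ZMod.intCast_zmod_eq_zero_iff_dvd q 2).2 (by exact_mod_cast h.two_dvd),
          Int.even_iff.1 h⟩
      · refine Or.inr ⟨?_, by have := Int.odd_iff.1 h; omega⟩
        obtain ⟨s, rfl⟩ := h
        push_cast
        rw [show (2 : ZMod 2) = 0 from rfl]; simp
    unfold rootCount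
    rw [Nat.card_eq_fintype_card]
    rcases ht with ⟨ht, ht'⟩ | ⟨ht, ht'⟩ <;> rcases hq with ⟨hq, hq'⟩ | ⟨hq, hq'⟩ <;>
      simp only [ht, ht', hq, hq', if_true, if_false] <;> decide
  · have : Fact p.Prime := ⟨hp⟩
    have hk : kroneckerPrime (-D) p = legendreSym p (-D) := by
      rw [kroneckerPrime, if_neg h2, jacobiSym.legendreSym.to_jacobiSym]
    have h2' : (2 : ZMod p) ≠ 0 := by
      intro h
      have : ((2 : ℕ) : ZMod p) = 0 := by exact_mod_cast h
      rw [ZMod.natCast_eq_zero_iff] at this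
      exact h2 ((Nat.prime_dvd_prime_iff_eq hp Nat.prime_two).1 this)
    have hDp : (D : ZMod p) = 4 * q - t ^ 2 := by
      exact_mod_cast congrArg (Int.cast : ℤ → ZMod p) hD
    rw [hk, add_comm, ← legendreSym.card_sqrts p h2, ← Set.ncard_eq_toFinset_card']
    congr 1
    -- completing the square
    refine Nat.card_congr ⟨fun x => ⟨2 * x.1 + t, ?_⟩, fun y => ⟨(y.1 - t) / 2, ?_⟩, ?_, ?_⟩
    · change (2 * x.1 + (t : ZMod p)) ^ 2 = ((-D : ℤ) : ZMod p)
      push_cast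
      linear_combination 4 * x.2 + hDp
    · have hy : y.1 ^ 2 = ((-D : ℤ) : ZMod p) := y.2
      push_cast at hy
      field_simp
      linear_combination hy - hDp
    · intro x
      apply Subtype.ext
      simp [h2']
    · intro y
      apply Subtype.ext
      simp
      field_simp
      ring

/-- The local factor: `ρ(p ^ (k + 1)) = χ(p) ^ (k + 1) + χ(p) ^ k`. -/
lemma rootCount_prime_pow {D t q : ℤ} (hD : D = 4 * q - t ^ 2)
    (key : ∀ p : ℕ, p.Prime → (p : ℤ) ∣ D → ∀ x : ℤ, ¬ (p : ℤ) ^ 2 ∣ x ^ 2 + t * x + q)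
    {p : ℕ} (hp : p.Prime) (k : ℕ) :
    (rootCount t q (p ^ (k + 1)) : ℤ) =
      kroneckerPrime (-D) p ^ (k + 1) + kroneckerPrime (-D) p ^ k := by
  by_cases hpD : (p : ℤ) ∣ D
  · have h0 : kroneckerPrime (-D) p = 0 := by
      unfold kroneckerPrime
      split_ifs with h2 h3 h4
      · rfl
      · subst h2; exfalso; apply h3; push_cast at hpD; omega
      · subst h2; exfalso; apply h3; push_cast at hpD; omega
      · have : Fact p.Prime := ⟨hp⟩
        rw [← jacobiSym.legendreSym.to_jacobiSym, legendreSym.eq_zero_iff,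
          ZMod.intCast_zmod_eq_zero_iff_dvd]
        exact hpD.neg_right
    rw [h0]
    rcases k with _ | k
    · rw [zero_add, pow_one, rootCount_prime hD hp, h0]; simp
    · rw [rootCount_ramified (key p hp hpD) k]; simp
  · have h1 : rootCount t q (p ^ (k + 1)) = rootCount t q p := by
      induction k with
      | zero => simp
      | succ k ih => rw [rootCount_prime_pow_succ hD hp hpD (Nat.succ_ne_zero k), ih]
    rw [h1, rootCount_prime hD hp]
    have h2 : kroneckerPrime (-D) p = 1 ∨ kroneckerPrime (-D) p = -1 := by
      unfold kroneckerPrime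
      split_ifs with h2 h3 h4
      · subst h2; exfalso; apply hpD; push_cast; omega
      · simp
      · simp
      · refine (jacobiSym.eq_one_or_neg_one ?_)
        rw [Int.gcd_comm, ← Int.isCoprime_iff_gcd_eq_one]
        exact (Nat.prime_iff_prime_int.1 hp).coprime_iff_not_dvd.2 (by simpa using hpD)
    rcases h2 with h | h <;> rw [h]
    · simp
    · rw [pow_succ]; ring

lemma isSquare_prime_pow_iff {p : ℕ} (hp : p.Prime) {i : ℕ} : IsSquare (p ^ i) ↔ Even i := by
  refine ⟨?_, fun h => h.isSquare_pow p⟩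
  rintro ⟨r, hr⟩
  have hr0 : r ≠ 0 := by
    rintro rfl
    exact pow_ne_zero i hp.ne_zero (by simpa using hr)
  have h := congrArg (fun m => m.factorization p) hr
  simp only [Nat.factorization_mul hr0 hr0, hp.factorization_pow] at h
  exact ⟨r.factorization p, by simpa using h⟩

open ArithmeticFunction ArithmeticFunction.zeta in
/-- The Dirichlet series identity `ζ(2s) · ∑ ρ(n) n⁻ˢ = ζ(s) L(s, χ)`, where `ρ` counts roots.
Both sides are Dirichlet convolutions of multiplicative functions, so it is enough to compare
them at prime powers. -/
theorem sum_rootCount {D t q : ℤ} (hD : D = 4 * q - t ^ 2)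
    (key : ∀ p : ℕ, p.Prime → (p : ℤ) ∣ D → ∀ x : ℤ, ¬ (p : ℤ) ^ 2 ∣ x ^ 2 + t * x + q)
    (n : ℕ) :
    ∑ d ∈ n.divisors, (if IsSquare d then (rootCount t q (n / d) : ℤ) else 0) =
      ∑ d ∈ n.divisors, kronecker (-D) d := by
  classical
  let χ : ArithmeticFunction ℤ := ⟨fun n => if n = 0 then 0 else kronecker (-D) n, by simp⟩
  let ρ : ArithmeticFunction ℤ := ⟨fun n => if n = 0 then 0 else rootCount t q n, by simp⟩
  let s : ArithmeticFunction ℤ := ⟨fun n => if n = 0 then 0 else if IsSquare n then 1 else 0, by simp⟩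
  have hχ : χ.IsMultiplicative := by
    refine IsMultiplicative.iff_ne_zero.2 ⟨by simp [χ, kronecker_one], ?_⟩
    intro m n hm hn _
    simp [χ, hm, hn, kronecker_mul]
  have hρ : ρ.IsMultiplicative := by
    refine IsMultiplicative.iff_ne_zero.2 ⟨by simp [ρ, rootCount_one], ?_⟩
    intro m n hm hn h
    simp [ρ, hm, hn, rootCount_mul _ _ h]
  have hs : s.IsMultiplicative := by
    refine IsMultiplicative.iff_ne_zero.2 ⟨by simp [s], ?_⟩
    intro m n hm hn h
    have : IsSquare (m * n) ↔ IsSquare m ∧ IsSquare n := by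
      refine ⟨fun hmn => ?_, fun hmn => hmn.1.mul hmn.2⟩
      obtain ⟨r, hr⟩ := hmn
      rw [← pow_two] at hr
      obtain ⟨a, ha⟩ := exists_eq_pow_of_mul_eq_pow (Nat.isUnit_iff.2 h) hr
      rw [mul_comm] at hr
      obtain ⟨b, hb⟩ := exists_eq_pow_of_mul_eq_pow (Nat.isUnit_iff.2 h.symm) hr
      exact ⟨⟨a, by rw [ha, pow_two]⟩, ⟨b, by rw [hb, pow_two]⟩⟩
    by_cases h1 : IsSquare m <;> by_cases h2 : IsSquare n <;> simp [s, hm, hn, this, h1, h2]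
  have hmain : s * ρ = (ζ : ArithmeticFunction ℤ) * χ := by
    rw [IsMultiplicative.eq_iff_eq_on_prime_powers _ (hs.mul hρ) _
      (isMultiplicative_zeta.natCast.mul hχ)]
    intro p k hp
    have hp0 : ∀ i, p ^ i ≠ 0 := fun i => pow_ne_zero _ hp.ne_zero
    rw [coe_zeta_mul_apply, mul_apply, Nat.sum_divisorsAntidiagonal (fun x y => s x * ρ y),
      Nat.sum_divisors_prime_pow hp, Nat.sum_divisors_prime_pow hp]
    have h1 : ∀ i ∈ range (k + 1), s (p ^ i) * ρ (p ^ k / p ^ i) =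
        if Even i then (rootCount t q (p ^ (k - i)) : ℤ) else 0 := by
      intro i hi
      rw [Nat.pow_div (Nat.lt_succ_iff.1 (mem_range.1 hi)) hp.pos]
      simp [s, ρ, hp.ne_zero, isSquare_prime_pow_iff hp]
    rw [sum_congr rfl h1]
    simp only [χ, coe_mk, if_neg (hp0 _), kronecker_prime_pow _ hp]
    clear h1
    -- passing from `k` to `k + 2` adds the term `ρ(p ^ (k + 2))`
    induction k using Nat.twoStepInduction with
    | zero =>
      simp only [zero_add, sum_range_one]
      simp [rootCount_one]
    | one =>
      have := rootCount_prime_pow hD key hp 0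
      simp only [zero_add, pow_one, pow_zero] at this
      simp [sum_range_succ, this, add_comm]
    | more k ih _ =>
      rw [sum_range_succ', sum_range_succ']
      have h2 : ∀ i ∈ range (k + 1),
          (if Even (i + 1 + 1) then (rootCount t q (p ^ (k + 2 - (i + 1 + 1))) : ℤ) else 0) =
          if Even i then (rootCount t q (p ^ (k - i)) : ℤ) else 0 := by
        intro i _
        simp [Nat.even_add_one]
      rw [sum_congr rfl h2, ih, Nat.sub_zero, rootCount_prime_pow hD key hp (k + 1),
        sum_range_succ _ (k + 2), sum_range_succ _ (k + 1)]
      simp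
      ring
  have h := congrArg (fun f : ArithmeticFunction ℤ => f n) hmain
  change (s * ρ) n = ((ζ : ArithmeticFunction ℤ) * χ) n at h
  rw [coe_zeta_mul_apply, mul_apply, Nat.sum_divisorsAntidiagonal (fun x y => s x * ρ y)] at h
  refine Eq.trans ?_ (h.trans ?_) <;> refine sum_congr rfl fun d hd => ?_
  · have hd0 : d ≠ 0 := (Nat.pos_of_mem_divisors hd).ne'
    have hnd : n / d ≠ 0 :=
      (Nat.div_pos (Nat.divisor_le hd) (Nat.pos_of_mem_divisors hd)).ne'
    have hnd' : ¬ (d = 0 ∨ n < d) := by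
      have := Nat.divisor_le hd
      omega
    simp only [s, ρ, coe_mk, if_neg hd0, if_neg hnd]
    split_ifs <;> simp
  · simp [χ, (Nat.pos_of_mem_divisors hd).ne']

/-! ### Reduction theory of binary quadratic forms -/

open scoped MatrixGroups

/-- The right action of `SL(2, ℤ)` on binary quadratic forms `(a, b, c)` by substitution. -/
def act (f : ℤ × ℤ × ℤ) (γ : SL(2, ℤ)) : ℤ × ℤ × ℤ :=
  (f.1 * γ 0 0 ^ 2 + f.2.1 * γ 0 0 * γ 1 0 + f.2.2 * γ 1 0 ^ 2,
   2 * f.1 * γ 0 0 * γ 0 1 + f.2.1 * (γ 0 0 * γ 1 1 + γ 0 1 * γ 1 0) + 2 * f.2.2 * γ 1 0 * γ 1 1,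
   f.1 * γ 0 1 ^ 2 + f.2.1 * γ 0 1 * γ 1 1 + f.2.2 * γ 1 1 ^ 2)

lemma sl_det (γ : SL(2, ℤ)) : γ 0 0 * γ 1 1 - γ 0 1 * γ 1 0 = 1 := by
  rw [← Matrix.det_fin_two]; exact γ.2

lemma sl_mul (γ δ : SL(2, ℤ)) (i j : Fin 2) :
    (γ * δ) i j = γ i 0 * δ 0 j + γ i 1 * δ 1 j := by
  simp [Matrix.mul_apply, Fin.sum_univ_two]

lemma act_mul (f : ℤ × ℤ × ℤ) (γ δ : SL(2, ℤ)) : act f (γ * δ) = act (act f γ) δ := by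
  ext <;> simp only [act, sl_mul] <;> ring

lemma act_one (f : ℤ × ℤ × ℤ) : act f 1 = f := by
  ext <;> simp [act]

lemma act_inv {f g : ℤ × ℤ × ℤ} {γ : SL(2, ℤ)} (h : act f γ = g) : act g γ⁻¹ = f := by
  rw [← h, ← act_mul, mul_inv_cancel, act_one]

lemma disc_act (f : ℤ × ℤ × ℤ) (γ : SL(2, ℤ)) :
    (act f γ).2.1 ^ 2 - 4 * (act f γ).1 * (act f γ).2.2 = f.2.1 ^ 2 - 4 * f.1 * f.2.2 := by
  have h := sl_det γ
  simp only [act]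
  linear_combination (f.2.1 ^ 2 - 4 * f.1 * f.2.2) *
    (γ 0 0 * γ 1 1 - γ 0 1 * γ 1 0 + 1) * h

/-- The matrix with the given entries, as an element of `SL(2, ℤ)`. -/
def slMk (p q r s : ℤ) (h : p * s - q * r = 1) : SL(2, ℤ) :=
  ⟨!![p, q; r, s], by rw [Matrix.det_fin_two_of]; exact h⟩

lemma act_slMk (f : ℤ × ℤ × ℤ) (p q r s : ℤ) (h : p * s - q * r = 1) :
    act f (slMk p q r s h) = (f.1 * p ^ 2 + f.2.1 * p * r + f.2.2 * r ^ 2,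
      2 * f.1 * p * q + f.2.1 * (p * s + q * r) + 2 * f.2.2 * r * s,
      f.1 * q ^ 2 + f.2.1 * q * s + f.2.2 * s ^ 2) := by
  simp [act, slMk]

lemma act_translate (f : ℤ × ℤ × ℤ) (k : ℤ) :
    act f (slMk 1 k 0 1 (by ring)) = (f.1, f.2.1 + 2 * f.1 * k, f.1 * k ^ 2 + f.2.1 * k + f.2.2) := by
  rw [act_slMk]; ext <;> simp; ring

lemma act_swap (f : ℤ × ℤ × ℤ) :
    act f (slMk 0 (-1) 1 0 (by ring)) = (f.2.2, -f.2.1, f.1) := by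
  rw [act_slMk]; ext <;> simp

/-- Gauss reduction, by descent on the leading coefficient. -/
lemma exists_act_isReducedForm {d : ℤ} (hd : d < 0) (N : ℕ) : ∀ f : ℤ × ℤ × ℤ, f.1 = N → 0 < f.1 →
    f.2.1 ^ 2 - 4 * f.1 * f.2.2 = d → ∃ γ : SL(2, ℤ), IsReducedForm d (act f γ) := by
  induction N using Nat.strong_induction_on with
  | _ N ih =>
    rintro f hfN hpos hdisc
    -- translate so that `-a < b ≤ a`
    obtain ⟨k, hk1, hk2⟩ : ∃ k : ℤ, -f.1 < f.2.1 + 2 * f.1 * k ∧ f.2.1 + 2 * f.1 * k ≤ f.1 := by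
      refine ⟨-((f.2.1 + f.1 - 1) / (2 * f.1)), ?_, ?_⟩
      · have := Int.mul_ediv_self_le (x := f.2.1 + f.1 - 1) (k := 2 * f.1) (by omega)
        linarith
      · have := Int.lt_mul_ediv_self_add (x := f.2.1 + f.1 - 1) (k := 2 * f.1) (by omega)
        linarith
    set g := act f (slMk 1 k 0 1 (by ring)) with hg
    have hg1 : g.1 = f.1 := by rw [hg, act_translate]
    have hg2 : g.2.1 = f.2.1 + 2 * f.1 * k := by rw [hg, act_translate]
    have hgd : g.2.1 ^ 2 - 4 * g.1 * g.2.2 = d := by rw [hg, disc_act, hdisc]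
    rw [← hg2, ← hg1] at hk1 hk2
    rw [← hg1] at hpos hfN
    suffices h : ∃ γ, IsReducedForm d (act g γ) by
      obtain ⟨γ, hγ⟩ := h
      exact ⟨_ * γ, by rw [act_mul]; exact hγ⟩
    have hc : 0 < g.2.2 := by nlinarith [sq_nonneg g.2.1]
    have hs := act_swap g
    set S := slMk 0 (-1) 1 0 (by ring) with hS
    rcases lt_trichotomy g.2.2 g.1 with hlt | heq | hgt
    · obtain ⟨γ, hγ⟩ := ih g.2.2.toNat (by omega) (act g S) (by rw [hs]; simp [hc.le])
        (by rw [hs]; exact hc) (by rw [disc_act, hgd])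
      exact ⟨S * γ, by rw [act_mul]; exact hγ⟩
    · by_cases hb : 0 ≤ g.2.1
      · refine ⟨1, ?_⟩
        rw [act_one]
        exact ⟨hgd, hpos, abs_le.2 ⟨hk1.le, hk2⟩, heq.ge, fun _ => hb⟩
      · refine ⟨S, ?_⟩
        rw [hs]
        refine ⟨by simp only; linarith, hc, ?_, heq.le, fun _ => by simp only; omega⟩
        simp only [abs_neg]
        exact abs_le.2 ⟨by omega, by omega⟩
    · refine ⟨1, ?_⟩
      rw [act_one]
      refine ⟨hgd, hpos, abs_le.2 ⟨hk1.le, hk2⟩, hgt.le, fun h => ?_⟩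
      rcases h with h | h
      · rcases abs_eq hpos.le |>.1 h with h | h <;> omega
      · omega

/-- If `γ` carries the reduced form `f` to the reduced form `g`, and the leading coefficient of `g`
is at most that of `f`, then `g.1 = f(p, r)` with `(p, r)` the first column of `γ`; since `g.1 ≤ f.1`,
this forces `|r| ≤ 1`, and the few remaining cases are boundary cases of the reduction
conditions. -/
lemma reduced_unique_aux {d : ℤ} {f g : ℤ × ℤ × ℤ} (hf : IsReducedForm d f)
    (hg : IsReducedForm d g) {γ : SL(2, ℤ)} (h : act f γ = g) (hle : g.1 ≤ f.1) : f = g := by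
  obtain ⟨a, b, c⟩ := f
  obtain ⟨a', b', c'⟩ := g
  obtain ⟨hd, ha, hba, hac, hb⟩ := hf
  obtain ⟨hd', ha', hba', hac', hb'⟩ := hg
  have hdet := sl_det γ
  simp only [act, Prod.mk.injEq] at *
  obtain ⟨h1, h2, -⟩ := h
  generalize γ 0 0 = p at *
  generalize γ 0 1 = q at *
  generalize γ 1 0 = r at *
  generalize γ 1 1 = s at *
  obtain ⟨hb1', hb2'⟩ := abs_le.1 hba'
  obtain ⟨hb1, hb2⟩ := abs_le.1 hba
  -- the last coefficient is determined by the first two and the discriminant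
  suffices hab : a = a' ∧ b = b' by
    obtain ⟨rfl, rfl⟩ := hab
    have : a * (c - c') = 0 := by linarith
    rcases mul_eq_zero.1 this with h | h
    · omega
    · exact ⟨rfl, rfl, by omega⟩
  have hbb : b ^ 2 ≤ a ^ 2 := sq_le_sq.2 (by rwa [abs_of_pos ha])
  have hr : r ^ 2 ≤ 1 := by
    by_contra hr
    have hr4 : 4 ≤ r ^ 2 := by
      by_contra hlt
      have h1 : |r| < 2 := abs_lt_of_sq_lt_sq (by linarith) (by norm_num)
      obtain ⟨_, _⟩ := abs_lt.1 h1
      have : r = -1 ∨ r = 0 ∨ r = 1 := by omega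
      rcases this with rfl | rfl | rfl <;> norm_num at hr
    -- completing the square in `a' = f(p, r)`
    have h4 : 4 * a * a' = (2 * a * p + b * r) ^ 2 + (4 * a * c - b ^ 2) * r ^ 2 := by
      rw [← h1]; ring
    have h5 : 3 * a ^ 2 ≤ 4 * a * c - b ^ 2 := by nlinarith
    have h6 : a * a' ≤ a * a := mul_le_mul_of_nonneg_left hle ha.le
    nlinarith [sq_nonneg (2 * a * p + b * r), mul_le_mul h5 hr4 (by norm_num) (by nlinarith)]
  have hr' : r = 0 ∨ r ^ 2 = 1 := by
    rcases eq_or_ne r 0 with h | h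
    · exact Or.inl h
    · exact Or.inr (le_antisymm hr (by have := sq_pos_of_ne_zero h; omega))
  rcases hr' with rfl | hr1
  · have hp2 : p ^ 2 = 1 := by
      have : IsUnit p := IsUnit.of_mul_eq_one s (by linarith)
      rcases Int.isUnit_iff.1 this with rfl | rfl <;> norm_num
    have haa : a = a' := by rw [← h1, hp2]; ring
    subst haa
    obtain ⟨k, hk⟩ : ∃ k, k = p * q := ⟨_, rfl⟩
    have h2' : b + 2 * (a * k) = b' := by
      rw [hk, ← h2]; linear_combination -b * hdet
    refine ⟨rfl, ?_⟩
    rcases lt_trichotomy k 0 with hk0 | hk0 | hk0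
    · have : a * k ≤ a * (-1) := mul_le_mul_of_nonneg_left (by omega) ha.le
      have e1 : b' = -a := by linarith
      have := hb' (Or.inl (by rw [e1, abs_neg, abs_of_pos ha]))
      omega
    · rw [← h2', hk0]; ring
    · have : a * 1 ≤ a * k := mul_le_mul_of_nonneg_left (by omega) ha.le
      have e1 : b = -a := by linarith
      have := hb (Or.inl (by rw [e1, abs_neg, abs_of_pos ha]))
      omega
  · obtain ⟨P, hP⟩ : ∃ P, P = p * r := ⟨_, rfl⟩
    have h1' : a * P ^ 2 + b * P + c = a' := by
      rw [hP, ← h1]; linear_combination (a * p ^ 2 - c) * hr1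
    have hP1 : -1 ≤ P ∧ P ≤ 1 := by
      by_contra hcon
      have : P ≤ -2 ∨ 2 ≤ P := by omega
      rcases this with h | h
      · nlinarith [mul_nonneg (sub_nonneg.2 hb2) (show 0 ≤ -P by omega),
          mul_nonneg ha.le (mul_nonneg_of_nonpos_of_nonpos (show P + 2 ≤ 0 by omega)
            (show P - 1 ≤ 0 by omega))]
      · nlinarith [mul_nonneg (show 0 ≤ a + b by omega) (show 0 ≤ P by omega),
          mul_nonneg ha.le (mul_nonneg (show 0 ≤ P - 2 by omega) (show 0 ≤ P + 1 by omega))]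
    have hP3 : P = 0 ∨ P = 1 ∨ P = -1 := by omega
    rcases hP3 with rfl | hP3
    · have hp : p = 0 := by
        rcases mul_eq_zero.1 hP.symm with h | h
        · exact h
        · rw [h] at hr1; norm_num at hr1
      subst hp
      have hca : c = a' := by linarith
      have hacE : a = c := by omega
      have hb0 := hb (Or.inr hacE)
      obtain ⟨k, hk⟩ : ∃ k, k = r * s := ⟨_, rfl⟩
      have h2' : -b + 2 * (a * k) = b' := by
        rw [hk, ← h2, hacE]; linear_combination b * hdet
      subst hca
      subst hacE
      refine ⟨rfl, ?_⟩
      rcases lt_trichotomy k 0 with hk0 | hk0 | hk0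
      · have : a * k ≤ a * (-1) := mul_le_mul_of_nonneg_left (by omega) ha.le
        linarith
      · have e1 : b' = -b := by rw [← h2', hk0]; ring
        have e2 : a * (a - c') = 0 := by rw [e1] at hd'; linarith
        have e3 : a = c' := by
          rcases mul_eq_zero.1 e2 with h | h <;> omega
        have := hb' (Or.inr e3)
        omega
      · rcases eq_or_lt_of_le (show 1 ≤ k by omega) with rfl | hk2
        · linarith
        · have : a * 2 ≤ a * k := mul_le_mul_of_nonneg_left (by omega) ha.le
          linarith
    · have hc : c ≤ |b| := by
        rcases hP3 with rfl | rfl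
        · have := neg_abs_le b; linarith
        · have := le_abs_self b; linarith
      have hca : c = a := by omega
      have hb3 : |b| = a := by omega
      have hb0 := hb (Or.inl hb3)
      rw [abs_of_nonneg hb0] at hb3
      subst hb3
      subst hca
      have haa : a' = c := by
        rcases hP3 with rfl | rfl
        · linarith
        · linarith
      subst haa
      refine ⟨rfl, ?_⟩
      have e1 : a' ^ 2 ≤ b' ^ 2 := by nlinarith
      have e2 : a' ≤ |b'| := by
        have := sq_le_sq.1 e1
        rwa [abs_of_pos ha] at this
      have e3 : |b'| = a' := le_antisymm hba' e2
      have := hb' (Or.inl e3)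
      rw [abs_of_nonneg this] at e3
      exact e3.symm

/-- Each class of forms contains at most one reduced form. -/
lemma reduced_unique {d : ℤ} {f g : ℤ × ℤ × ℤ} (hf : IsReducedForm d f)
    (hg : IsReducedForm d g) {γ : SL(2, ℤ)} (h : act f γ = g) : f = g := by
  rcases le_total g.1 f.1 with hle | hle
  · exact reduced_unique_aux hf hg h hle
  · exact (reduced_unique_aux hg hf (act_inv h) hle).symm

/-! ### Automorphs -/

/-- Two matrices with the same first column differ by a translation on the right, so the middle
coefficients of the transformed forms agree modulo twice the leading one. -/
lemma second_coeff_congr (f : ℤ × ℤ × ℤ) {γ δ : SL(2, ℤ)} (h0 : γ 0 0 = δ 0 0)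
    (h1 : γ 1 0 = δ 1 0) : ∃ k, (act f δ).2.1 = (act f γ).2.1 + 2 * k * (act f γ).1 := by
  refine ⟨γ 1 1 * δ 0 1 - γ 0 1 * δ 1 1, ?_⟩
  have hγ := sl_det γ
  have hδ := sl_det δ
  simp only [act]
  rw [← h0, ← h1] at *
  generalize γ 0 0 = p at *
  generalize γ 0 1 = q at *
  generalize γ 1 0 = r at *
  generalize γ 1 1 = s at *
  generalize δ 0 1 = q' at *
  generalize δ 1 1 = s' at *
  have e1 : q' = q + (s * q' - q * s') * p := by linear_combination q * hδ - q' * hγ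
  have e2 : s' = s + (s * q' - q * s') * r := by linear_combination s * hδ - s' * hγ
  linear_combination (2 * f.1 * p + f.2.1 * r) * e1 + (f.2.1 * p + 2 * f.2.2 * r) * e2

/-- The form `(m, 2x + t, c)` of discriminant `-D` is primitive: a prime dividing its three
coefficients would divide `D`, and its square would divide `m c = x² + t x + q`. -/
lemma primitive {D t q : ℤ} (hD : D = 4 * q - t ^ 2)
    (key : ∀ p : ℕ, p.Prime → (p : ℤ) ∣ D → ∀ x : ℤ, ¬ (p : ℤ) ^ 2 ∣ x ^ 2 + t * x + q)
    {m c x : ℤ} (h : m * c = x ^ 2 + t * x + q) :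
    ∃ u v y : ℤ, u * m + v * (2 * x + t) + y * c = 1 := by
  have hg : Int.gcd (Int.gcd m (2 * x + t)) c = 1 := by
    by_contra hne
    obtain ⟨p, hp, hdvd⟩ := Nat.exists_prime_and_dvd hne
    have hd : (p : ℤ) ∣ Int.gcd (Int.gcd m (2 * x + t)) c := Int.natCast_dvd_natCast.2 hdvd
    have h1 := hd.trans (Int.gcd_dvd_left ..)
    have hc := hd.trans (Int.gcd_dvd_right ..)
    have hm := h1.trans (Int.gcd_dvd_left ..)
    have hb := h1.trans (Int.gcd_dvd_right ..)
    refine key p hp ?_ x ?_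
    · have : D = 4 * (m * c) - (2 * x + t) * (2 * x + t) := by rw [h, hD]; ring
      rw [this]
      exact dvd_sub ((hm.mul_right c).mul_left 4) (hb.mul_right _)
    · rw [← h, pow_two]; exact mul_dvd_mul hm hc
  have e1 := Int.gcd_eq_gcd_ab (Int.gcd m (2 * x + t)) c
  have e2 := Int.gcd_eq_gcd_ab m (2 * x + t)
  rw [hg] at e1
  generalize Int.gcdA (Int.gcd m (2 * x + t)) c = A at e1
  generalize Int.gcdB (Int.gcd m (2 * x + t)) c = B at e1
  rw [e2] at e1
  refine ⟨Int.gcdA m (2 * x + t) * A, Int.gcdB m (2 * x + t) * A, B, ?_⟩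
  push_cast at e1
  linear_combination -e1

/-- The automorph of the form `(m, 2x + t, c)` attached to the norm-one element `X + s ω`, where
`ω² = tω - q`. -/
def automorph {t q m c x : ℤ} (h : m * c = x ^ 2 + t * x + q)
    (u : {u : ℤ × ℤ // u.1 ^ 2 + t * u.1 * u.2 + q * u.2 ^ 2 = 1}) : SL(2, ℤ) :=
  slMk (u.1.1 - x * u.1.2) (-(c * u.1.2)) (m * u.1.2) (u.1.1 + (x + t) * u.1.2) (by
    have := u.2
    linear_combination this + u.1.2 ^ 2 * h)

lemma act_automorph {t q m c x : ℤ} (h : m * c = x ^ 2 + t * x + q)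
    (u : {u : ℤ × ℤ // u.1 ^ 2 + t * u.1 * u.2 + q * u.2 ^ 2 = 1}) :
    act (m, 2 * x + t, c) (automorph h u) = (m, 2 * x + t, c) := by
  obtain ⟨⟨X, s⟩, hu⟩ := u
  simp only at hu
  rw [automorph, act_slMk]
  simp only [Prod.mk.injEq]
  refine ⟨?_, ?_, ?_⟩
  · linear_combination m * hu + m * s ^ 2 * h
  · linear_combination (2 * x + t) * hu + (2 * x + t) * s ^ 2 * h
  · linear_combination c * hu + c * s ^ 2 * h

/-- Every automorph `σ` of a primitive form comes from a norm-one element. Only the first columns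
are compared, which is all that is needed to count representations. -/
lemma exists_automorph {t q m c x : ℤ} (hm : m ≠ 0) (h : m * c = x ^ 2 + t * x + q)
    (hprim : ∃ u v y : ℤ, u * m + v * (2 * x + t) + y * c = 1)
    {σ : SL(2, ℤ)} (hσ : act (m, 2 * x + t, c) σ = (m, 2 * x + t, c)) :
    ∃ u, σ 0 0 = (automorph h u) 0 0 ∧ σ 1 0 = (automorph h u) 1 0 := by
  obtain ⟨u, v, y, huv⟩ := hprim
  have h4 := sl_det σ
  simp only [act, Prod.mk.injEq] at hσ
  obtain ⟨h1, h2, h3⟩ := hσ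
  simp only [automorph, slMk, Matrix.SpecialLinearGroup.coe_mk, Matrix.of_apply,
    Matrix.cons_val_zero, Matrix.cons_val_one, Matrix.cons_val', Matrix.cons_val_fin_one]
  generalize σ 0 0 = p at *
  generalize σ 0 1 = q' at *
  generalize σ 1 0 = r at *
  generalize σ 1 1 = w at *
  -- invariance says that `(r, w - p, -q')` is proportional to `(m, 2x + t, c)`
  have hb : 2 * (m * (w - p)) = 2 * ((2 * x + t) * r) := by
    linear_combination -2 * w * h1 + r * h2 + (2 * m * p + (2 * x + t) * r) * h4
  have k1 : m * (w - p) = (2 * x + t) * r := by linarith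
  have k2 : m * q' = -(c * r) := by
    have : 2 * (m * q') = 2 * (-(c * r)) := by
      linear_combination w * h2 - 2 * r * h3 - (2 * m * q' + (2 * x + t) * w) * h4
    linarith
  have k3 : (2 * x + t) * q' = -(c * (w - p)) := by
    have : 2 * ((2 * x + t) * q') = 2 * (-(c * (w - p))) := by
      linear_combination -q' * h2 + 2 * p * h3 - ((2 * x + t) * q' + 2 * c * w) * h4
    linarith
  -- the factor of proportionality is an integer by primitivity
  obtain ⟨s, hs⟩ : ∃ s, s = u * r + v * (w - p) - y * q' := ⟨_, rfl⟩
  have hr : r = m * s := by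
    rw [hs]; linear_combination (-r) * huv - v * k1 + y * k2
  have hw : w = p + (2 * x + t) * s := by
    apply mul_left_cancel₀ hm
    linear_combination k1 + (2 * x + t) * hr
  have hq : q' = -(c * s) := by
    apply mul_left_cancel₀ hm
    linear_combination k2 - c * hr
  refine ⟨⟨(p + x * s, s), ?_⟩, ?_, ?_⟩
  · simp only
    rw [hr, hw, hq] at h4
    linear_combination h4 - s ^ 2 * h
  · simp
  · simp [hr]

/-! ### Representations, roots and norm-one elements -/

/-- A root `z` modulo `m` yields a form `(m, 2x + t, c)` of discriminant `-D` with `x` lifting `z`,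
and it is equivalent to a reduced form `f`. -/
lemma exists_rep {D t q : ℤ} (hDpos : 0 < D) (hD : D = 4 * q - t ^ 2) {m : ℕ} (hm : 0 < m)
    (z : ZMod m) (hz : z ^ 2 + (t : ZMod m) * z + (q : ZMod m) = 0) :
    ∃ (f : ℤ × ℤ × ℤ) (γ : SL(2, ℤ)) (x c : ℤ), IsReducedForm (-D) f ∧ (x : ZMod m) = z ∧
      (m : ℤ) * c = x ^ 2 + t * x + q ∧ act f γ = ((m : ℤ), 2 * x + t, c) := by
  obtain ⟨x, rfl⟩ := ZMod.intCast_surjective z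
  have hdvd : (m : ℤ) ∣ x ^ 2 + t * x + q := by
    rw [← ZMod.intCast_zmod_eq_zero_iff_dvd]
    push_cast
    exact hz
  obtain ⟨c, hc⟩ := hdvd
  obtain ⟨γ, hγ⟩ := exists_act_isReducedForm (d := -D) (by omega) m ((m : ℤ), 2 * x + t, c) rfl
    (by simpa using hm) (by simp only; rw [hD]; linear_combination 4 * hc)
  exact ⟨_, γ⁻¹, x, c, hγ, rfl, hc.symm, act_inv rfl⟩

/-- The pairs `(e, x)` with `e² ∣ n` and `x` a root of `X² + tX + q` modulo `n / e²`. -/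
abbrev RootPairs (t q : ℤ) (n : ℕ) : Type :=
  Σ e : {e : ℕ // 0 < e ∧ e ^ 2 ∣ n},
    {x : ZMod (n / e.1 ^ 2) // x ^ 2 + (t : ZMod (n / e.1 ^ 2)) * x + (q : ZMod (n / e.1 ^ 2)) = 0}

lemma rootPairs_ext {t q : ℤ} {n : ℕ} (a b : RootPairs t q n) (h : a.1.1 = b.1.1) {x y k : ℤ}
    (hx : (x : ZMod (n / a.1.1 ^ 2)) = a.2.1) (hy : (y : ZMod (n / b.1.1 ^ 2)) = b.2.1)
    (hk : y = x + k * ((n / a.1.1 ^ 2 : ℕ) : ℤ)) : a = b := by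
  obtain ⟨⟨e, he⟩, ⟨z, hz⟩⟩ := a
  obtain ⟨⟨e', he'⟩, ⟨z', hz'⟩⟩ := b
  simp only at h
  subst h
  simp only at hx hy hk
  have : z = z' := by
    rw [← hx, ← hy, hk, Int.cast_add, Int.cast_mul, Int.cast_natCast]
    simp only [ZMod.natCast_self, mul_zero, add_zero]
  subst this
  rfl

/-- The first column of a matrix in `SL(2, ℤ)` is primitive, so a multiple of it determines the
multiplier. -/
lemma sl_eq_mul_dvd {γ δ : SL(2, ℤ)} {e e' : ℕ} (h0 : (e : ℤ) * γ 0 0 = e' * δ 0 0)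
    (h1 : (e : ℤ) * γ 1 0 = e' * δ 1 0) : e ∣ e' := by
  have := sl_det δ
  refine Int.natCast_dvd_natCast.1 ⟨γ 0 0 * δ 1 1 - δ 0 1 * γ 1 0, ?_⟩
  linear_combination (-(e' : ℤ)) * this - δ 1 1 * h0 + δ 0 1 * h1

/-- Left multiplication in `SL(2, ℤ)` is injective on first columns. -/
lemma sl_col_cancel {G σ τ : SL(2, ℤ)} (h0 : (G * σ) 0 0 = (G * τ) 0 0)
    (h1 : (G * σ) 1 0 = (G * τ) 1 0) : σ 0 0 = τ 0 0 ∧ σ 1 0 = τ 1 0 := by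
  have hG := sl_det G
  simp only [sl_mul] at h0 h1
  constructor
  · linear_combination G 1 1 * h0 - G 0 1 * h1 - (σ 0 0 - τ 0 0) * hG
  · linear_combination G 0 0 * h1 - G 1 0 * h0 - (σ 1 0 - τ 1 0) * hG

/-- A representation `(f, v)` of `n` determines the content `e` of `v`, a root modulo `n / e²`
of the polynomial of discriminant `-D` (the middle coefficient of `f` in a basis starting with
`v / e`), and a norm-one element (the automorphism relating `v / e` to a chosen representative);
this correspondence is bijective. -/
lemma card_representations {D t q : ℤ} (hDpos : 0 < D) (hD : D = 4 * q - t ^ 2)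
    (key : ∀ p : ℕ, p.Prime → (p : ℤ) ∣ D → ∀ x : ℤ, ¬ (p : ℤ) ^ 2 ∣ x ^ 2 + t * x + q)
    {n : ℕ} (hn : 0 < n) :
    repCount D n = Nat.card (RootPairs t q n) *
      Nat.card {u : ℤ × ℤ // u.1 ^ 2 + t * u.1 * u.2 + q * u.2 ^ 2 = 1} := by
  rw [← Nat.card_prod, repCount]
  have hmpos : ∀ a : RootPairs t q n, 0 < n / a.1.1 ^ 2 := fun a =>
    Nat.div_pos (Nat.le_of_dvd hn a.1.2.2) (pow_pos a.1.2.1 2)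
  have hmul : ∀ a : RootPairs t q n, (a.1.1 : ℤ) ^ 2 * ((n / a.1.1 ^ 2 : ℕ) : ℤ) = n := fun a => by
    exact_mod_cast Nat.mul_div_cancel' a.1.2.2
  -- a reduced form equivalent to `(m, 2x + t, c)`, chosen for each pair in `RootPairs`
  choose F G X C hF hX hC hA using fun a : RootPairs t q n =>
    exists_rep hDpos hD (hmpos a) a.2.1 a.2.2
  have hact : ∀ a u, act (F a) (G a * automorph (hC a) u) =
      (((n / a.1.1 ^ 2 : ℕ) : ℤ), 2 * X a + t, C a) := fun a u => by
    rw [act_mul, hA, act_automorph]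
  have hrep : ∀ a u, (F a).1 * ((a.1.1 : ℤ) * (G a * automorph (hC a) u) 0 0) ^ 2 +
      (F a).2.1 * ((a.1.1 : ℤ) * (G a * automorph (hC a) u) 0 0) *
        ((a.1.1 : ℤ) * (G a * automorph (hC a) u) 1 0) +
      (F a).2.2 * ((a.1.1 : ℤ) * (G a * automorph (hC a) u) 1 0) ^ 2 = n := fun a u => by
    have h1 := congrArg Prod.fst (hact a u)
    simp only [act] at h1
    rw [← hmul a]
    linear_combination (a.1.1 : ℤ) ^ 2 * h1
  symm
  refine Nat.card_congr (Equiv.ofBijective (fun au => ⟨(F au.1,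
    (au.1.1.1 : ℤ) * (G au.1 * automorph (hC au.1) au.2) 0 0,
    (au.1.1.1 : ℤ) * (G au.1 * automorph (hC au.1) au.2) 1 0), hF _, hrep au.1 au.2⟩) ⟨?_, ?_⟩)
  · rintro ⟨a, u⟩ ⟨b, w⟩ hab
    simp only [Subtype.mk.injEq, Prod.mk.injEq] at hab
    obtain ⟨hFab, h0, h1⟩ := hab
    have he : a.1.1 = b.1.1 := Nat.dvd_antisymm (sl_eq_mul_dvd h0 h1)
      (sl_eq_mul_dvd h0.symm h1.symm)
    have hne : (a.1.1 : ℤ) ≠ 0 := by exact_mod_cast a.1.2.1.ne'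
    have heZ : (b.1.1 : ℤ) = a.1.1 := by rw [he]
    replace h0 := mul_left_cancel₀ hne (h0.trans (congrArg (· * _) heZ))
    replace h1 := mul_left_cancel₀ hne (h1.trans (congrArg (· * _) heZ))
    obtain ⟨k, hk⟩ := second_coeff_congr (F a) h0 h1
    rw [hact a u, hFab, hact b w] at hk
    simp only at hk
    obtain rfl : a = b := rootPairs_ext a b he (hX a) (hX b) (k := k) (by linarith)
    obtain ⟨e0, e1⟩ := sl_col_cancel h0 h1
    have hm : ((n / a.1.1 ^ 2 : ℕ) : ℤ) ≠ 0 := by exact_mod_cast (hmpos a).ne'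
    obtain ⟨⟨p, r⟩, hu⟩ := u
    obtain ⟨⟨p', r'⟩, hu'⟩ := w
    simp only [automorph, slMk, Matrix.SpecialLinearGroup.coe_mk, Matrix.of_apply,
      Matrix.cons_val_zero, Matrix.cons_val_one, Matrix.cons_val', Matrix.cons_val_fin_one]
      at e0 e1
    obtain rfl := mul_left_cancel₀ hm e1
    obtain rfl : p = p' := by linarith
    rfl
  · rintro ⟨⟨f, v1, v2⟩, hf, hv⟩
    simp only at hf hv
    have hgpos : 0 < Int.gcd v1 v2 := by
      rw [Int.gcd_pos_iff]
      by_contra! hcon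
      rw [hcon.1, hcon.2] at hv
      norm_num at hv
      omega
    obtain ⟨p, r, hpr, hp, hr⟩ := Int.exists_gcd_one hgpos
    obtain ⟨e, he⟩ : ∃ e, e = Int.gcd v1 v2 := ⟨_, rfl⟩
    rw [← he] at hgpos hp hr
    obtain ⟨γ, hγ0, hγ1⟩ := (Int.isCoprime_iff_gcd_eq_one.2 hpr).exists_SL2_col 0
    have hdisc := disc_act f γ
    rw [hf.1] at hdisc
    have hval : (e : ℤ) ^ 2 * (act f γ).1 = n := by
      rw [← hv, hp, hr]; simp only [act]; rw [hγ0, hγ1]; ring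
    obtain ⟨⟨a', b', c'⟩, hact'⟩ : ∃ g, g = act f γ := ⟨_, rfl⟩
    rw [← hact'] at hdisc hval
    simp only at hdisc hval
    have hedvd : e ^ 2 ∣ n := by
      have : ((e ^ 2 : ℕ) : ℤ) ∣ (n : ℤ) := ⟨a', by push_cast; exact hval.symm⟩
      exact_mod_cast this
    have hepos : 0 < (e : ℤ) ^ 2 := by positivity
    have ha' : ((n / e ^ 2 : ℕ) : ℤ) = a' := by
      rw [Int.natCast_div, ← hval]; push_cast
      exact Int.mul_ediv_cancel_left _ hepos.ne.symm
    -- the middle coefficient has the parity of `t`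
    obtain ⟨x', hx'⟩ : ∃ x', b' = 2 * x' + t := by
      have hev : Even ((b' - t) * (b' + t)) := ⟨2 * (a' * c' - q), by rw [hD] at hdisc; linarith⟩
      have hev2 : Even (b' - t) := by
        rcases Int.even_mul.1 hev with h | h
        · exact h
        · have : b' - t = (b' + t) - 2 * t := by ring
          rw [this]; exact h.sub (even_two_mul t)
      obtain ⟨y, hy⟩ := hev2
      exact ⟨y, by linarith⟩
    subst hx'
    have hac : a' * c' = x' ^ 2 + t * x' + q := by rw [hD] at hdisc; linarith
    obtain ⟨a, hae, hax⟩ : ∃ a : RootPairs t q n, a.1.1 = e ∧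
        ((x' : ZMod (n / a.1.1 ^ 2)) = a.2.1) := by
      refine ⟨⟨⟨e, hgpos, hedvd⟩, ⟨(x' : ZMod (n / e ^ 2)), ?_⟩⟩, rfl, rfl⟩
      have := congrArg (Int.cast : ℤ → ZMod (n / e ^ 2)) hac
      rw [← ha'] at this
      rw [Int.cast_mul, Int.cast_natCast, ZMod.natCast_self, zero_mul] at this
      simpa using this.symm
    rw [← hae] at ha'
    obtain ⟨k, hk⟩ : ∃ k, X a = x' + a' * k := by
      have : ((X a - x' : ℤ) : ZMod (n / a.1.1 ^ 2)) = 0 := by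
        push_cast; rw [hX, hax, sub_self]
      rw [ZMod.intCast_zmod_eq_zero_iff_dvd _ _, ha'] at this
      obtain ⟨k, hk⟩ := this
      exact ⟨k, by linarith⟩
    have ha0 : a' ≠ 0 := by rw [← ha']; exact_mod_cast (hmpos a).ne'
    have hC' := hC a
    have hA' := hA a
    -- make the middle coefficient of the transformed form match the chosen representative
    have htr : act f (γ * slMk 1 k 0 1 (by ring)) =
        (((n / a.1.1 ^ 2 : ℕ) : ℤ), 2 * X a + t, C a) := by
      rw [act_mul, ← hact', act_translate]
      simp only [Prod.mk.injEq]
      refine ⟨ha'.symm, by rw [hk]; ring, ?_⟩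
      apply mul_left_cancel₀ ha0
      rw [ha', hk] at hC'
      rw [hC']
      linear_combination hac
    obtain ⟨γ', hγ'⟩ : ∃ γ', γ' = γ * slMk 1 k 0 1 (by ring) := ⟨_, rfl⟩
    rw [← hγ'] at htr
    have hγ'0 : γ' 0 0 = p := by rw [hγ', sl_mul, ← hγ0]; simp [slMk]
    have hγ'1 : γ' 1 0 = r := by rw [hγ', sl_mul, ← hγ1]; simp [slMk]
    have hfF : f = F a := reduced_unique hf (hF a) (γ := γ' * (G a)⁻¹) (by
      rw [act_mul, htr, act_inv hA'])
    obtain ⟨u, hu0, hu1⟩ := exists_automorph (by rw [ha']; exact ha0) (hC a)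
      (primitive hD key (hC a)) (σ := (G a)⁻¹ * γ') (by
        rw [act_mul, act_inv hA', ← hfF, htr])
    have hmulG : G a * ((G a)⁻¹ * γ') = γ' := by group
    refine ⟨(a, u), ?_⟩
    simp only [Subtype.mk.injEq, Prod.mk.injEq]
    refine ⟨hfF.symm, ?_, ?_⟩
    · rw [sl_mul, ← hu0, ← hu1, ← sl_mul, hmulG, hγ'0, hae, hp, mul_comm]
    · rw [sl_mul, ← hu0, ← hu1, ← sl_mul, hmulG, hγ'1, hae, hr, mul_comm]

lemma card_rootPairs (t q : ℤ) {n : ℕ} (hn : 0 < n) :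
    (Nat.card (RootPairs t q n) : ℤ) =
      ∑ d ∈ n.divisors, (if IsSquare d then (rootCount t q (n / d) : ℤ) else 0) := by
  have hmem : ∀ e : ℕ, e ∈ (n.divisors.filter (fun e => e ^ 2 ∣ n)) ↔ 0 < e ∧ e ^ 2 ∣ n := by
    intro e
    simp only [Finset.mem_filter, Nat.mem_divisors]
    exact ⟨fun h => ⟨Nat.pos_of_dvd_of_pos h.1.1 hn, h.2⟩,
      fun h => ⟨⟨(Dvd.intro_left _ (pow_two e).symm).trans h.2, hn.ne'⟩, h.2⟩⟩
  have : Fintype {e : ℕ // 0 < e ∧ e ^ 2 ∣ n} := Fintype.subtype _ hmem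
  have hne : ∀ e : {e : ℕ // 0 < e ∧ e ^ 2 ∣ n}, NeZero (n / e.1 ^ 2) := fun e =>
    ⟨(Nat.div_pos (Nat.le_of_dvd hn e.2.2) (pow_pos e.2.1 2)).ne'⟩
  rw [Nat.card_sigma]
  rw [← Finset.sum_filter]
  push_cast
  refine (Finset.sum_subtype _ hmem (fun e => (rootCount t q (n / e ^ 2) : ℤ))).symm.trans ?_
  refine Finset.sum_bij (fun e _ => e ^ 2) ?_ ?_ ?_ ?_
  · intro e he
    rw [hmem] at he
    simp only [Finset.mem_filter, Nat.mem_divisors]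
    exact ⟨⟨he.2, hn.ne'⟩, e, pow_two e⟩
  · intro e _ e' _ h
    exact Nat.pow_left_injective (by norm_num) h
  · rintro d hd
    simp only [Finset.mem_filter, Nat.mem_divisors] at hd
    obtain ⟨⟨hd, -⟩, e, rfl⟩ := hd
    refine ⟨e, (hmem e).2 ⟨?_, by rwa [pow_two]⟩, pow_two e⟩
    exact Nat.pos_of_mul_pos_left (Nat.pos_of_dvd_of_pos hd hn)
  · intro e _; rfl

/-! ### Fundamental discriminants -/

/-- A fundamental discriminant `-D` is the discriminant of a monic quadratic polynomial
`X² + tX + q` whose values are not divisible by `p²` for any prime `p` dividing `D`. -/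
lemma exists_polynomial {D : ℤ} (hfund : IsFundamentalDiscriminant (-D)) :
    ∃ t q : ℤ, D = 4 * q - t ^ 2 ∧
      ∀ p : ℕ, p.Prime → (p : ℤ) ∣ D → ∀ x : ℤ, ¬ (p : ℤ) ^ 2 ∣ x ^ 2 + t * x + q := by
  rcases hfund with ⟨hmod, hsq⟩ | ⟨hmod, hsq, hmod4⟩
  · refine ⟨1, (D + 1) / 4, by omega, fun p hp hpD x hx => ?_⟩
    have hp' := Nat.prime_iff_prime_int.1 hp
    obtain ⟨q, hq⟩ : ∃ q, q = (D + 1) / 4 := ⟨_, rfl⟩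
    have hDq : D = 4 * q - 1 := by omega
    rw [← hq] at hx
    have h4 : (2 * x + 1) ^ 2 + D = 4 * (x ^ 2 + 1 * x + q) := by rw [hDq]; ring
    have h1 : (p : ℤ) ∣ (2 * x + 1) ^ 2 := by
      rw [← Int.dvd_add_left hpD, h4]
      exact ((Dvd.intro_left _ (pow_two (p : ℤ)).symm).trans hx).mul_left 4
    have h2 : (p : ℤ) ^ 2 ∣ (2 * x + 1) ^ 2 := pow_dvd_pow_of_dvd (hp'.dvd_of_dvd_pow h1) 2
    have h3 : (p : ℤ) * p ∣ -D := by
      rw [← pow_two, dvd_neg, ← Int.dvd_add_right h2, h4]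
      exact hx.mul_left 4
    exact hp'.not_isUnit (hsq _ h3)
  · refine ⟨0, D / 4, by omega, fun p hp hpD x hx => ?_⟩
    have hp' := Nat.prime_iff_prime_int.1 hp
    obtain ⟨q, hq⟩ : ∃ q, q = D / 4 := ⟨_, rfl⟩
    have hDq : D = 4 * q := by omega
    have hqn : -D / 4 = -q := by omega
    rw [← hq] at hx
    rw [hqn] at hsq hmod4
    rw [zero_mul, add_zero] at hx
    rcases hp.eq_two_or_odd' with rfl | hodd
    · have hx4 : (x ^ 2 + q) % 4 = 0 := Int.emod_eq_zero_of_dvd (by simpa using hx)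
      have hx2 : x ^ 2 % 4 = 0 ∨ x ^ 2 % 4 = 1 := by
        rcases Int.even_or_odd' x with ⟨k, rfl | rfl⟩
        · left; ring_nf; omega
        · right; ring_nf; omega
      omega
    · have hpq : (p : ℤ) ∣ q := by
        rw [hDq] at hpD
        rcases hp'.dvd_or_dvd hpD with h | h
        · exfalso
          have h4 : p ∣ 2 ^ 2 := by exact_mod_cast h
          have := (Nat.prime_dvd_prime_iff_eq hp Nat.prime_two).1 (hp.dvd_of_dvd_pow h4)
          rw [this] at hodd
          exact absurd hodd (by decide)
        · exact h
      have h1 : (p : ℤ) ∣ x ^ 2 := by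
        rw [← Int.dvd_add_left hpq]
        exact (Dvd.intro_left _ (pow_two (p : ℤ)).symm).trans hx
      have h2 : (p : ℤ) ^ 2 ∣ x ^ 2 := pow_dvd_pow_of_dvd (hp'.dvd_of_dvd_pow h1) 2
      have h3 : (p : ℤ) * p ∣ -q := by
        rw [← pow_two, dvd_neg, ← Int.dvd_add_right h2]
        exact hx
      exact hp'.not_isUnit (hsq _ h3)

/-- For a positive integer `n` coprime to a prime `N`, and a negative fundamental
discriminant `-D < 0`, the number of representations of `n` by reduced positive definite
binary quadratic forms of discriminant `-D` equals `2 u_D Σ_{d ∣ n} χ_{-D}(d)`, where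
`χ_{-D}` is the Kronecker symbol of discriminant `-D` and `u_D` is half the number of
units of the ring of integers of `ℚ(√-D)`. -/
theorem repCount_eq_two_uD_mul_divisor_sum (D : ℕ) (hD : 0 < D)
    (hfund : IsFundamentalDiscriminant (-(D : ℤ)))
    (K : Type) [Field K] [NumberField K]
    (hdeg : Module.finrank ℚ K = 2) (hα : ∃ α : K, α ^ 2 = ((-(D : ℤ) : ℤ) : K))
    (N : ℕ) (hN : N.Prime) (n : ℕ) (hn : 0 < n) (hcop : Nat.Coprime n N) :
    (repCount (D : ℤ) n : ℤ) =
      2 * (Nat.card (𝓞 K)ˣ / 2 : ℕ) * ∑ d ∈ n.divisors, kronecker (-(D : ℤ)) d := by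
  obtain ⟨t, q, hDq, key⟩ := exists_polynomial hfund
  have hDpos : 0 < (D : ℤ) := by exact_mod_cast hD
  obtain ⟨e⟩ := units_equiv hDpos hDq key K hdeg hα
  rw [card_representations hDpos hDq key hn, ← Nat.card_congr e, Nat.cast_mul,
    card_rootPairs t q hn, sum_rootCount hDq key n]
  have h2 : (2 * (Nat.card (𝓞 K)ˣ / 2 : ℕ) : ℤ) = (Nat.card (𝓞 K)ˣ : ℕ) := by
    exact_mod_cast even_card_units K
  rw [h2, mul_comm]
end

section
/- The Riemann hypothesis holds if and only if for every ε > 0, the Mertens function M(X) = Σ_{1 ≤ n ≤ X} μ(n) satisfies M(X) = O(X^{1/2 + ε}). -/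
/-!
Write `M` for the Mertens function.

*The bound on `M` gives the Riemann hypothesis.* For `re s > 1`, Abel summation gives
`1/ζ(s) = s ∫_1^∞ M(t) t^(-s-1) dt`. If `M(t) = O(t^(1/2+ε))` for every `ε > 0`, the right-hand side is
holomorphic on `re s > 1/2`, so `ζ` has no zero there (`riemannZeta_ne_zero_of_mertens_bound`), and
the functional equation disposes of `re s < 1/2` (`riemannHypothesis_of_ne_zero`).

*The Riemann hypothesis gives the bound on `M`.* The analytic input is Littlewood's estimate
`1/ζ(s) = O((1 + |im s|)^ε)` on `1/2 < a ≤ re s ≤ 2` (`norm_invZeta_le`). On the disk of radius `3/2`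
about `2 + it` the Riemann hypothesis provides a logarithm of `ζ`, whose real part is at most
`log |t| + O(1)`; Borel–Carathéodory bounds the logarithm itself by `O(log |t|)` on a slightly smaller
circle, it is `O(1)` on the circle of radius `1/2`, and the three-circles theorem yields
`log ζ(s) = O((log |t|)^θ)` with `θ < 1` in between (`norm_inv_le_of_disk`).

Perron's formula is used in the form with the absolutely convergent kernel `1/(s(s+1))`, which
expresses the Riesz mean `M₁(N) = ∑_{n ≤ N} μ(n) (N - n)` as
`(2π)⁻¹ ∫ N^(s+1) / (s(s+1) ζ(s)) dt` on the line `s = 2 + it` (`integral_perronIntegrand`). No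
smoothing has to be undone afterwards, because `M(N) = M₁(N+1) - M₁(N)` exactly. After moving the line
to `re s = 1/2 + η` (`two_pi_mul_mertens`), the difference `(N+1)^(s+1) - N^(s+1)` is bounded both by
`|s+1| (N+1)^(re s)` and by `2 (N+1)^(re s + 1)`; a geometric mean of the two bounds with weight `η` on
the second makes the integral converge absolutely at the cost of a factor `(N+1)^η`
(`norm_perronIntegrand_sub_le`), and `M(N) = O(N^(1/2+2η))` follows.
-/

open Finset Filter

/-- The Mertens function `M(X) = Σ_{1 ≤ n ≤ X} μ(n)`. -/
def mertens (X : ℕ) : ℤ := ∑ n ∈ Finset.Icc 1 X, ArithmeticFunction.moebius n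

/-! ### The function `(s - 1) ζ(s)` and analytic continuation -/

/-- The integral `∫_1^∞ f(t) t^(-z-1) dt` of a function with `f(t) = O(t^a)` is holomorphic on
`a < re z`: it is the Mellin transform, at `-z`, of `f` cut off to `(1, ∞)`. -/
theorem differentiableAt_tailIntegral {f : ℝ → ℂ} {a C : ℝ}
    (hf : MeasureTheory.LocallyIntegrableOn f (Set.Ioi 0))
    (hO : ∀ t : ℝ, 1 ≤ t → ‖f t‖ ≤ C * t ^ a) {s : ℂ} (hs : a < s.re) :
    DifferentiableAt ℂ (fun z : ℂ ↦ ∫ t in Set.Ioi (1 : ℝ), f t * (t : ℂ) ^ (-(z + 1))) s := by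
  have key : (fun z : ℂ ↦ ∫ t in Set.Ioi (1 : ℝ), f t * (t : ℂ) ^ (-(z + 1))) =
      fun z ↦ mellin ((Set.Ioi (1 : ℝ)).indicator f) (-z) := by
    ext z
    have h1 : ∀ t : ℝ, (t : ℂ) ^ (-z - 1) • (Set.Ioi (1 : ℝ)).indicator f t =
        (Set.Ioi (1 : ℝ)).indicator (fun t ↦ f t * (t : ℂ) ^ (-(z + 1))) t := by
      intro t
      by_cases ht : t ∈ Set.Ioi (1 : ℝ)
      · rw [Set.indicator_of_mem ht, Set.indicator_of_mem ht, smul_eq_mul, mul_comm]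
        ring_nf
      · rw [Set.indicator_of_notMem ht, Set.indicator_of_notMem ht, smul_zero]
    simp only [mellin, h1]
    rw [MeasureTheory.setIntegral_indicator measurableSet_Ioi,
      Set.inter_eq_right.mpr (Set.Ioi_subset_Ioi zero_le_one)]
  rw [key]
  have hd : DifferentiableAt ℂ (mellin ((Set.Ioi (1 : ℝ)).indicator f)) (-s) := by
    refine mellin_differentiableAt_of_isBigO_rpow (a := -a) (b := (-s).re - 1) ?_ ?_ ?_ ?_ ?_
    · intro x hx
      obtain ⟨t, ht, hi⟩ := hf x hx
      exact ⟨t, ht, hi.indicator measurableSet_Ioi⟩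
    · refine Asymptotics.IsBigO.of_bound C ?_
      filter_upwards [eventually_gt_atTop 1] with t ht
      rw [Set.indicator_of_mem (by exact ht), neg_neg, Real.norm_of_nonneg (by positivity)]
      exact hO t ht.le
    · simpa using hs
    · refine Asymptotics.IsBigO.of_bound 1 ?_
      have : Set.Ioo (0 : ℝ) 1 ∈ nhdsWithin (0 : ℝ) (Set.Ioi 0) :=
        Ioo_mem_nhdsGT zero_lt_one
      filter_upwards [this] with t ht
      rw [Set.indicator_of_notMem (by simp [ht.2.le]), norm_zero]
      positivity
    · linarith
  exact hd.comp s differentiableAt_id.neg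

/-- The entire function `(s - 1) ζ(s)`. Its value at `s = 1` is set to the residue `1`, since
`riemannZeta 1` has no meaning there. -/
noncomputable def zetaMulSubOne : ℂ → ℂ :=
  Function.update (fun s ↦ (s - 1) * riemannZeta s) 1 1

theorem zetaMulSubOne_of_ne {s : ℂ} (hs : s ≠ 1) :
    zetaMulSubOne s = (s - 1) * riemannZeta s := by
  simp [zetaMulSubOne, hs]

theorem zetaMulSubOne_one : zetaMulSubOne 1 = 1 := by
  simp [zetaMulSubOne]

theorem differentiable_zetaMulSubOne : Differentiable ℂ zetaMulSubOne := by
  have hne : ∀ z : ℂ, z ≠ 1 → DifferentiableAt ℂ zetaMulSubOne z := by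
    intro z hz
    have h1 : DifferentiableAt ℂ (fun s ↦ (s - 1) * riemannZeta s) z :=
      (differentiableAt_id.sub_const 1).mul (differentiableAt_riemannZeta hz)
    refine h1.congr_of_eventuallyEq ?_
    filter_upwards [isOpen_ne.mem_nhds hz] with w hw using zetaMulSubOne_of_ne hw
  intro z
  rcases eq_or_ne z 1 with rfl | hz
  · refine (Complex.analyticAt_of_differentiable_on_punctured_nhds_of_continuousAt ?_ ?_).differentiableAt
    · filter_upwards [self_mem_nhdsWithin] with w hw using hne w hw
    · exact continuousAt_update_same.mpr riemannZeta_residue_one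
  · exact hne z hz

theorem locallyIntegrableOn_floor_sum (f : ℕ → ℂ) :
    MeasureTheory.LocallyIntegrableOn (fun t : ℝ ↦ ∑ k ∈ Icc 1 ⌊t⌋₊, f k) (Set.Ioi 0) := by
  have h := locallyIntegrableOn_mul_sum_Icc (𝕜 := ℂ) f (m := 1) (a := 0) le_rfl
    (g := fun _ ↦ 1)
    ((continuous_const (y := (1 : ℂ))).locallyIntegrable.locallyIntegrableOn _)
  simp only [one_mul] at h
  exact h.mono_set Set.Ioi_subset_Ici_self

/-- Identity theorem for half-planes: two functions holomorphic on `a < re s` that agree on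
`1 < re s` agree on `a < re s`. -/
theorem eqOn_of_eqOn_one_lt_re {f g : ℂ → ℂ} {a : ℝ}
    (hf : ∀ s : ℂ, a < s.re → DifferentiableAt ℂ f s)
    (hg : ∀ s : ℂ, a < s.re → DifferentiableAt ℂ g s)
    (h : ∀ s : ℂ, 1 < s.re → f s = g s) {s : ℂ} (hs : a < s.re) : f s = g s := by
  have hU : IsOpen {s : ℂ | a < s.re} := isOpen_lt continuous_const Complex.continuous_re
  have hF : AnalyticOnNhd ℂ f {s : ℂ | a < s.re} :=
    DifferentiableOn.analyticOnNhd (fun z hz ↦ (hf z hz).differentiableWithinAt) hU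
  have hG : AnalyticOnNhd ℂ g {s : ℂ | a < s.re} :=
    DifferentiableOn.analyticOnNhd (fun z hz ↦ (hg z hz).differentiableWithinAt) hU
  have hV : IsOpen {s : ℂ | 1 < s.re} := isOpen_lt continuous_const Complex.continuous_re
  refine hF.eqOn_of_preconnected_of_eventuallyEq hG
    (convex_halfSpace_re_gt a).isPreconnected (z₀ := ((max a 1 + 1 : ℝ) : ℂ)) ?_ ?_ hs
  · change a < ((max a 1 + 1 : ℝ) : ℂ).re
    rw [Complex.ofReal_re]
    linarith [le_max_left a 1]
  · filter_upwards [hV.mem_nhds (show ((max a 1 + 1 : ℝ) : ℂ) ∈ {s : ℂ | 1 < s.re} by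
      change 1 < ((max a 1 + 1 : ℝ) : ℂ).re
      rw [Complex.ofReal_re]
      linarith [le_max_right a 1])] with z hz using h z hz

/-! ### From the bound on the Mertens function to the Riemann hypothesis -/

/-- Abel summation for a Dirichlet series with coefficients bounded by `1`. -/
theorem LSeries_eq_tailIntegral {f : ℕ → ℂ} (hf : ∀ n, ‖f n‖ ≤ 1) {s : ℂ} (hs : 1 < s.re) :
    LSeries f s = s * ∫ t in Set.Ioi (1 : ℝ), (∑ k ∈ Icc 1 ⌊t⌋₊, f k) * t ^ (-(s + 1)) := by
  refine LSeries_eq_mul_integral' f zero_le_one hs (Asymptotics.IsBigO.of_bound 1 ?_)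
  filter_upwards with n
  rw [Real.norm_of_nonneg (by positivity), Real.rpow_one, one_mul, Real.norm_of_nonneg (by positivity)]
  calc ∑ k ∈ Icc 1 n, ‖f k‖ ≤ ∑ k ∈ Icc 1 n, (1 : ℝ) := Finset.sum_le_sum fun k _ ↦ hf k
    _ = n := by simp

theorem norm_moebius_le (n : ℕ) : ‖((ArithmeticFunction.moebius n : ℤ) : ℂ)‖ ≤ 1 := by
  rw [Complex.norm_intCast]
  exact_mod_cast ArithmeticFunction.abs_moebius_le_one

theorem LSeries_moebius_eq {s : ℂ} (hs : 1 < s.re) :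
    riemannZeta s * LSeries (fun n ↦ ((ArithmeticFunction.moebius n : ℤ) : ℂ)) s = 1 := by
  have := ArithmeticFunction.LSeries_zeta_mul_Lseries_moebius hs
  rwa [ArithmeticFunction.LSeries_zeta_eq_riemannZeta hs] at this

/-- If `M(X) = O(X^(1/2+ε))` for all `ε > 0`, then `s ∫_1^∞ M(t) t^(-s-1) dt` is holomorphic on
`1/2 < re s`, where it continues `1/ζ`; its product with `(s - 1) ζ(s)` is therefore `s - 1`, and `ζ`
cannot vanish there for `s ≠ 1`. -/
theorem riemannZeta_ne_zero_of_mertens_bound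
    (h : ∀ ε : ℝ, 0 < ε → (fun X : ℕ => (mertens X : ℝ)) =O[atTop]
      (fun X : ℕ => (X : ℝ) ^ ((1 : ℝ) / 2 + ε))) {s : ℂ} (hs : 1 / 2 < s.re) (hs1 : s ≠ 1) :
    riemannZeta s ≠ 0 := by
  set a : ℝ := 1 / 2 + (s.re - 1 / 2) / 2 with ha
  have ha0 : 0 < a := by linarith
  have has : a < s.re := by linarith
  obtain ⟨C, hC, hb⟩ := Asymptotics.bound_of_isBigO_nat_atTop (h ((s.re - 1 / 2) / 2) (by linarith))
  set f : ℕ → ℂ := fun n ↦ ((ArithmeticFunction.moebius n : ℤ) : ℂ) with hf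
  have hsum : ∀ n : ℕ, ∑ k ∈ Icc 1 n, f k = ((mertens n : ℝ) : ℂ) := by
    intro n
    simp [mertens, hf]
  have hbound : ∀ t : ℝ, 1 ≤ t → ‖∑ k ∈ Icc 1 ⌊t⌋₊, f k‖ ≤ C * t ^ a := by
    intro t ht
    have h1 : 0 < ⌊t⌋₊ := Nat.floor_pos.mpr ht
    have h2 : (0 : ℝ) < (⌊t⌋₊ : ℝ) ^ a := Real.rpow_pos_of_pos (by exact_mod_cast h1) _
    have h3 := hb h2.ne'
    rw [Real.norm_of_nonneg h2.le] at h3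
    rw [hsum, Complex.norm_real]
    refine h3.trans ?_
    gcongr
    exact Nat.floor_le (by linarith)
  have hF : ∀ z : ℂ, a < z.re → DifferentiableAt ℂ (fun z : ℂ ↦ zetaMulSubOne z *
      (z * ∫ t in Set.Ioi (1 : ℝ), (∑ k ∈ Icc 1 ⌊t⌋₊, f k) * (t : ℂ) ^ (-(z + 1)))) z :=
    fun z hz ↦ differentiable_zetaMulSubOne.differentiableAt.mul (differentiableAt_id.mul
      (differentiableAt_tailIntegral (locallyIntegrableOn_floor_sum f) hbound hz))
  have hid := eqOn_of_eqOn_one_lt_re (g := fun z ↦ z - 1) hF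
    (fun z _ ↦ differentiableAt_id.sub_const 1) (fun z hz ↦ by
      have hz1 : z ≠ 1 := by rintro rfl; simp at hz
      rw [← LSeries_eq_tailIntegral norm_moebius_le hz, zetaMulSubOne_of_ne hz1, mul_assoc,
        LSeries_moebius_eq hz, mul_one]) has
  intro h0
  simp only [zetaMulSubOne_of_ne hs1, h0, mul_zero, zero_mul] at hid
  exact hs1 (sub_eq_zero.mp hid.symm)

/-- A zero-free half-plane `1/2 < re s` gives the Riemann hypothesis: by the functional equation a zero
`w` with `re w < 1/2` comes either from a zero at `1 - w` or from a zero of the cosine factor, and the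
latter are the trivial zeros. -/
theorem riemannHypothesis_of_ne_zero
    (h : ∀ s : ℂ, 1 / 2 < s.re → s ≠ 1 → riemannZeta s ≠ 0) : RiemannHypothesis := by
  intro w hw htriv hw1
  by_contra hre
  rcases lt_or_gt_of_ne hre with hlt | hgt
  swap
  · exact h w hgt hw1 hw
  have hw0 : w ≠ 0 := by
    rintro rfl
    rw [riemannZeta_zero] at hw
    norm_num at hw
  have hsre : 1 / 2 < (1 - w).re := by simp; linarith
  have hs1 : 1 - w ≠ 1 := by simpa using hw0
  have hsn : ∀ n : ℕ, 1 - w ≠ -n := by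
    intro n hn
    rw [hn] at hsre
    have : (0 : ℝ) ≤ n := n.cast_nonneg
    simp at hsre
    linarith
  have hfe := riemannZeta_one_sub hsn hs1
  rw [sub_sub_cancel, hw] at hfe
  have hG : Complex.Gamma (1 - w) ≠ 0 := Complex.Gamma_ne_zero hsn
  have hpi : ((2 : ℂ) * Real.pi) ^ (-(1 - w)) ≠ 0 := by
    rw [Ne, Complex.cpow_eq_zero_iff]
    simp [Real.pi_ne_zero]
  have hcos : Complex.cos (Real.pi * (1 - w) / 2) = 0 := by
    have := hfe.symm
    simpa [hG, hpi, h (1 - w) hsre hs1] using this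
  obtain ⟨k, hk⟩ := Complex.cos_eq_zero_iff.mp hcos
  have hpi' : (Real.pi : ℂ) ≠ 0 := by exact_mod_cast Real.pi_ne_zero
  have hwk : w = -2 * k := by
    have : Real.pi * (1 - w) = Real.pi * (2 * k + 1) := by linear_combination 2 * hk
    have := mul_left_cancel₀ hpi' this
    linear_combination -this
  have hkre : w.re = -2 * k := by
    rw [hwk]; simp
  have hk0 : 0 ≤ k := by
    have : (-1 : ℝ) < k := by linarith
    have : (-1 : ℤ) < k := by exact_mod_cast this
    omega
  obtain ⟨n, rfl⟩ := Int.eq_ofNat_of_zero_le hk0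
  rcases n with _ | n
  · simp [hwk] at hw0
  · exact htriv ⟨n, by rw [hwk]; push_cast; ring⟩

/-! ### Growth of zeta, and zero-free functions on disks -/

theorem riemannZeta_ne_zero_of_riemannHypothesis (hRH : RiemannHypothesis) {s : ℂ}
    (hs : 1 / 2 < s.re) (hs1 : s ≠ 1) : riemannZeta s ≠ 0 := by
  intro h0
  have := hRH s h0 (by
    rintro ⟨n, rfl⟩
    have h1 : (-2 * ((n : ℂ) + 1)).re = -2 * ((n : ℝ) + 1) := by simp
    have : (0 : ℝ) ≤ n := n.cast_nonneg
    rw [h1] at hs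
    linarith) hs1
  linarith

/-- The continuation of `(s - 1) ζ(s)` to `0 < re s` by means of the fractional part of `t`. -/
theorem zetaMulSubOne_eq {s : ℂ} (hs : 0 < s.re) :
    zetaMulSubOne s = s - s * (s - 1) *
      ∫ t in Set.Ioi (1 : ℝ), ((t : ℂ) - (⌊t⌋₊ : ℂ)) * (t : ℂ) ^ (-(s + 1)) := by
  have hli : MeasureTheory.LocallyIntegrableOn (fun t : ℝ ↦ (t : ℂ) - (⌊t⌋₊ : ℂ)) (Set.Ioi 0) := by
    refine MeasureTheory.LocallyIntegrableOn.sub ?_ ?_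
    · exact (Complex.continuous_ofReal.locallyIntegrable).locallyIntegrableOn _
    · simpa using locallyIntegrableOn_floor_sum (fun _ ↦ 1)
  refine eqOn_of_eqOn_one_lt_re (a := 0)
    (g := fun s ↦ s - s * (s - 1) *
      ∫ t in Set.Ioi (1 : ℝ), ((t : ℂ) - (⌊t⌋₊ : ℂ)) * (t : ℂ) ^ (-(s + 1)))
    (fun z _ ↦ differentiable_zetaMulSubOne z) ?_ ?_ hs
  · intro z hz
    have := differentiableAt_tailIntegral (a := 0) (C := 1) hli (fun t ht ↦ by
      have h1 := Nat.floor_le (show 0 ≤ t by linarith)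
      have h2 := Nat.lt_floor_add_one t
      rw [Real.rpow_zero, mul_one, ← Complex.ofReal_natCast, ← Complex.ofReal_sub,
        Complex.norm_real, Real.norm_of_nonneg (by linarith)]
      linarith) hz
    fun_prop
  · intro z hz
    have hz1 : z ≠ 1 := by rintro rfl; simp at hz
    have hz0 : z ≠ 0 := by rintro rfl; simp at hz; linarith
    have hz1' : z - 1 ≠ 0 := sub_ne_zero.mpr hz1
    have hzeta := LSeries_eq_tailIntegral (f := 1) (by simp) hz
    rw [LSeries_one_eq_riemannZeta hz] at hzeta
    simp only [Pi.one_apply, sum_const, Nat.card_Icc, Nat.add_sub_cancel, nsmul_eq_mul,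
      mul_one] at hzeta
    have hint1 : MeasureTheory.IntegrableOn (fun t : ℝ ↦ (t : ℂ) * (t : ℂ) ^ (-(z + 1)))
        (Set.Ioi 1) := by
      refine (integrableOn_Ioi_cpow_of_lt (a := -z) (by simpa using hz) zero_lt_one).congr_fun
        (fun t ht ↦ ?_) measurableSet_Ioi
      have : (t : ℂ) ≠ 0 := by exact_mod_cast (zero_lt_one.trans ht).ne'
      simp only
      rw [show -(z + 1) = -z - 1 by ring, Complex.cpow_sub _ _ this, Complex.cpow_one]
      field_simp
    have hint2 : MeasureTheory.IntegrableOn (fun t : ℝ ↦ (⌊t⌋₊ : ℂ) * (t : ℂ) ^ (-(z + 1)))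
        (Set.Ioi 1) := by
      refine MeasureTheory.Integrable.mono' hint1.norm ?_ ?_
      · refine MeasureTheory.AEStronglyMeasurable.mul ?_ ?_
        · exact (Measurable.comp (by fun_prop) Nat.measurable_floor).aestronglyMeasurable
        · exact (Measurable.pow_const (by fun_prop) _).aestronglyMeasurable
      · refine (MeasureTheory.ae_restrict_iff' measurableSet_Ioi).mpr (MeasureTheory.ae_of_all _ fun t ht ↦ ?_)
        rw [norm_mul, norm_mul]
        gcongr
        rw [Complex.norm_natCast, Complex.norm_real, Real.norm_of_nonneg (zero_lt_one.trans ht).le]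
        exact Nat.floor_le (zero_lt_one.trans ht).le
    have hval : ∫ t in Set.Ioi (1 : ℝ), (t : ℂ) * (t : ℂ) ^ (-(z + 1)) = 1 / (z - 1) := by
      have h1 := integral_Ioi_cpow_of_lt (a := -z) (by simpa using hz) (zero_lt_one' ℝ)
      rw [MeasureTheory.setIntegral_congr_fun (g := fun t : ℝ ↦ (t : ℂ) ^ (-z)) measurableSet_Ioi, h1]
      · rw [Complex.ofReal_one, Complex.one_cpow, show -z + 1 = -(z - 1) by ring]
        field_simp
      · intro t ht
        have : (t : ℂ) ≠ 0 := by exact_mod_cast (zero_lt_one.trans ht).ne'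
        simp only
        rw [show -(z + 1) = -z - 1 by ring, Complex.cpow_sub _ _ this, Complex.cpow_one]
        field_simp
    simp only [sub_mul]
    rw [MeasureTheory.integral_sub hint1 hint2, hval, zetaMulSubOne_of_ne hz1, hzeta]
    field_simp
    ring

/-- Growth of `(s - 1) ζ(s)` on `1/2 ≤ re s`, from its representation by the fractional part. -/
theorem norm_zetaMulSubOne_le {s : ℂ} (hs : 1 / 2 ≤ s.re) :
    ‖zetaMulSubOne s‖ ≤ ‖s‖ + 2 * (‖s‖ * ‖s - 1‖) := by
  have hs0 : 0 < s.re := by linarith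
  rw [zetaMulSubOne_eq hs0]
  refine (norm_sub_le _ _).trans ?_
  rw [norm_mul, norm_mul, mul_comm 2]
  gcongr
  have hval : ∫ t in Set.Ioi (1 : ℝ), t ^ (-(s.re + 1)) = 1 / s.re := by
    rw [integral_Ioi_rpow_of_lt (by linarith) zero_lt_one, Real.one_rpow]
    rw [show -(s.re + 1) + 1 = - s.re by ring]
    field_simp
  calc ‖∫ t in Set.Ioi (1 : ℝ), ((t : ℂ) - (⌊t⌋₊ : ℂ)) * (t : ℂ) ^ (-(s + 1))‖
      ≤ ∫ t in Set.Ioi (1 : ℝ), t ^ (-(s.re + 1)) := by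
        refine MeasureTheory.norm_integral_le_of_norm_le
          (integrableOn_Ioi_rpow_of_lt (by linarith) zero_lt_one) ?_
        refine (MeasureTheory.ae_restrict_iff' measurableSet_Ioi).mpr
          (MeasureTheory.ae_of_all _ fun t ht ↦ ?_)
        have ht0 : 0 < t := zero_lt_one.trans ht
        have h1 := Nat.floor_le ht0.le
        have h2 := Nat.lt_floor_add_one t
        rw [norm_mul, Complex.norm_cpow_eq_rpow_re_of_pos ht0, ← Complex.ofReal_natCast,
          ← Complex.ofReal_sub, Complex.norm_real, Real.norm_of_nonneg (by linarith)]
        have : (-(s + 1)).re = -(s.re + 1) := by simp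
        rw [this]
        exact mul_le_of_le_one_left (by positivity) (by linarith)
    _ = 1 / s.re := hval
    _ ≤ 2 := by rw [div_le_iff₀ hs0]; linarith

theorem norm_riemannZeta_le {s : ℂ} (hs : 1 / 2 ≤ s.re) (hs' : s.re ≤ 7 / 2)
    (him : 1 ≤ |s.im|) : ‖riemannZeta s‖ ≤ 14 * |s.im| := by
  have h1 : 1 ≤ ‖s - 1‖ := him.trans (by simpa using Complex.abs_im_le_norm (s - 1))
  have hs1 : s ≠ 1 := by rintro rfl; simp at him; linarith
  have h2 := norm_zetaMulSubOne_le hs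
  rw [zetaMulSubOne_of_ne hs1, norm_mul] at h2
  have h3 : ‖s‖ ≤ 7 / 2 + |s.im| := by
    refine (Complex.norm_le_abs_re_add_abs_im s).trans ?_
    rw [abs_of_nonneg (by linarith)]
    linarith
  have h4 : ‖s - 1‖ * ‖riemannZeta s‖ ≤ ‖s - 1‖ * (3 * ‖s‖) := by
    nlinarith [norm_nonneg s]
  have := le_of_mul_le_mul_left h4 (by linarith)
  linarith

/-- A Dirichlet series is bounded on a half-plane `x ≤ re s` on whose edge it converges absolutely. -/
theorem norm_LSeries_le {f : ℕ → ℂ} {x : ℝ} (hf : LSeriesSummable f x) {s : ℂ} (hs : x ≤ s.re) :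
    ‖LSeries f s‖ ≤ ∑' n, ‖LSeries.term f x n‖ := by
  have h : ∀ n, ‖LSeries.term f s n‖ ≤ ‖LSeries.term f x n‖ := fun n ↦
    LSeries.norm_term_le_of_re_le_re f (by simpa using hs) n
  exact tsum_of_norm_bounded hf.norm.hasSum h

/-- **Hadamard's three-circles theorem**, deduced from the three-lines theorem through `exp`. -/
theorem three_circles {g : ℂ → ℂ} {r₁ r₂ R A B : ℝ} (h0 : 0 < r₁) (h12 : r₁ < r₂) (h2R : r₂ < R)
    (hg : DifferentiableOn ℂ g (Metric.ball 0 R))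
    (hA : ∀ z, ‖z‖ = r₁ → ‖g z‖ ≤ A) (hB : ∀ z, ‖z‖ = r₂ → ‖g z‖ ≤ B)
    {z : ℂ} (h1 : r₁ ≤ ‖z‖) (h2 : ‖z‖ ≤ r₂) :
    ‖g z‖ ≤ A ^ (1 - (Real.log ‖z‖ - Real.log r₁) / (Real.log r₂ - Real.log r₁)) *
      B ^ ((Real.log ‖z‖ - Real.log r₁) / (Real.log r₂ - Real.log r₁)) := by
  have hz0 : 0 < ‖z‖ := h0.trans_le h1
  have hz : z ≠ 0 := norm_pos_iff.mp hz0
  have hr2 : 0 < r₂ := h0.trans h12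
  have hlog : Real.log r₁ < Real.log r₂ := Real.log_lt_log h0 h12
  have hexp : ∀ w : ℂ, w.re ≤ Real.log r₂ → ‖Complex.exp w‖ ≤ r₂ := fun w hw ↦ by
    rw [Complex.norm_exp]
    exact (Real.exp_le_exp.mpr hw).trans_eq (Real.exp_log hr2)
  have hdiff : ∀ w : ℂ, w.re ≤ Real.log r₂ → DifferentiableAt ℂ (fun w ↦ g (Complex.exp w)) w := by
    intro w hw
    have : DifferentiableAt ℂ g (Complex.exp w) :=
      hg.differentiableAt (Metric.isOpen_ball.mem_nhds (by
        rw [mem_ball_zero_iff]; exact (hexp w hw).trans_lt h2R))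
    exact this.comp w Complex.differentiable_exp.differentiableAt
  have key := Complex.HadamardThreeLines.norm_le_interp_of_mem_verticalClosedStrip'
    (f := fun w ↦ g (Complex.exp w)) (z := Complex.log z) (a := A) (b := B) hlog
    ?_ ?_ ?_ ?_ ?_
  · simpa [Complex.exp_log hz, Complex.log_re] using key
  · simp only [Complex.HadamardThreeLines.verticalClosedStrip, Set.mem_preimage, Complex.log_re]
    exact ⟨Real.log_le_log h0 h1, Real.log_le_log hz0 h2⟩
  · refine ⟨fun w hw ↦ (hdiff w hw.2.le).differentiableWithinAt, fun w hw ↦ ?_⟩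
    have hcl : w.re ≤ Real.log r₂ := by
      have : closure (Complex.HadamardThreeLines.verticalStrip (Real.log r₁) (Real.log r₂)) ⊆
          {w : ℂ | w.re ≤ Real.log r₂} :=
        closure_minimal (fun w hw ↦ hw.2.le) (isClosed_le Complex.continuous_re continuous_const)
      exact this hw
    exact (hdiff w hcl).continuousAt.continuousWithinAt
  · have hK : IsCompact (Metric.closedBall (0 : ℂ) r₂) := isCompact_closedBall _ _
    obtain ⟨C, hC⟩ := hK.exists_bound_of_continuousOn
      (hg.continuousOn.mono (Metric.closedBall_subset_ball h2R))
    refine ⟨C, ?_⟩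
    rintro _ ⟨w, hw, rfl⟩
    exact hC _ (by rw [mem_closedBall_zero_iff]; exact hexp w hw.2)
  · intro w hw
    exact hA _ (by rw [Complex.norm_exp, show w.re = _ from hw, Real.exp_log h0])
  · intro w hw
    exact hB _ (by rw [Complex.norm_exp, show w.re = _ from hw, Real.exp_log hr2])

/-- A holomorphic function without zeros on a disk has a holomorphic logarithm there, normalised to
vanish at the centre: `f = f(c) exp g` with `g(c) = 0`. -/
theorem exists_log_quotient {f : ℂ → ℂ} {c : ℂ} {R : ℝ} (hR : 0 < R)
    (hf : DifferentiableOn ℂ f (Metric.ball c R)) (h0 : ∀ z ∈ Metric.ball c R, f z ≠ 0) :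
    ∃ g : ℂ → ℂ, g c = 0 ∧ (∀ z ∈ Metric.ball c R, HasDerivAt g (deriv f z / f z) z) ∧
      ∀ z ∈ Metric.ball c R, f z = f c * Complex.exp (g z) := by
  have hd : DifferentiableOn ℂ (fun z ↦ deriv f z / f z) (Metric.ball c R) :=
    (hf.deriv Metric.isOpen_ball).div hf h0
  obtain ⟨P, hP⟩ := hd.isExactOn_ball
  refine ⟨fun z ↦ P z - P c, by simp, fun z hz ↦ (hP z hz).sub_const _, fun z hz ↦ ?_⟩
  have hc : c ∈ Metric.ball c R := Metric.mem_ball_self hR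
  have hder : ∀ w ∈ Metric.ball c R,
      HasDerivAt (fun w ↦ f w * Complex.exp (-(P w - P c))) 0 w := by
    intro w hw
    have h1 : HasDerivAt f (deriv f w) w :=
      (hf.differentiableAt (Metric.isOpen_ball.mem_nhds hw)).hasDerivAt
    have h2 := h1.mul (((hP w hw).sub_const (P c)).neg.cexp)
    refine h2.congr_deriv ?_
    have e : deriv f w / f w * f w = deriv f w := div_mul_cancel₀ _ (h0 w hw)
    simp only [Pi.neg_apply]
    linear_combination -Complex.exp (-(P w - P c)) * e
  have hconst := (convex_ball c R).is_const_of_fderivWithin_eq_zero (𝕜 := ℂ)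
    (f := fun w ↦ f w * Complex.exp (-(P w - P c)))
    (fun w hw ↦ (hder w hw).differentiableAt.differentiableWithinAt)
    (fun w hw ↦ by
      rw [fderivWithin_of_isOpen Metric.isOpen_ball hw]
      have := (hder w hw).hasFDerivAt.fderiv
      rw [this]; ext; simp) hz hc
  simp only [sub_self, neg_zero, Complex.exp_zero, mul_one] at hconst
  rw [← hconst, mul_assoc, ← Complex.exp_add]
  simp

/-- Littlewood's argument on a single disk. Let `f` be zero-free on the disk of radius `3/2` about `c`,
let `|f| ≤ e^M` on this disk, and let `f'/f` on the disk of radius `1/2`, as well as `log |1/f(c)|`, be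
bounded by `K`. Then `log |1/f|` is at most `K + K^(1-θ) (3 (M + K) / δ)^θ` for
`1/2 ≤ |z - c| ≤ 3/2 - 2δ`. The logarithm of `f / f(c)` is `O(K)` on the circle of radius `1/2` and, by
Borel–Carathéodory, `O((M + K)/δ)` on the circle of radius `3/2 - δ`; the three-circles theorem
interpolates. The point is that `θ < 1`, so that the bound is of smaller order than `M`. -/
theorem norm_inv_le_of_disk {f : ℂ → ℂ} {c : ℂ} {δ K M : ℝ} (hδ : 0 < δ) (hδ' : δ ≤ 1 / 2)
    (hK : 1 ≤ K) (hM : 0 ≤ M)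
    (hf : DifferentiableOn ℂ f (Metric.ball c (3 / 2)))
    (h0 : ∀ z ∈ Metric.ball c (3 / 2), f z ≠ 0)
    (hfM : ∀ z ∈ Metric.ball c (3 / 2), ‖f z‖ ≤ Real.exp M)
    (hfK : ∀ z ∈ Metric.closedBall c (1 / 2), ‖deriv f z / f z‖ ≤ K)
    (hfc : ‖(f c)⁻¹‖ ≤ Real.exp K) {θ : ℝ}
    (hθ : θ = (Real.log (3 / 2 - 2 * δ) - Real.log (1 / 2)) /
      (Real.log (3 / 2 - δ) - Real.log (1 / 2)))
    {z : ℂ} (hz1 : 1 / 2 ≤ ‖z - c‖) (hz2 : ‖z - c‖ ≤ 3 / 2 - 2 * δ) :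
    ‖(f z)⁻¹‖ ≤ Real.exp (K + K ^ (1 - θ) * (3 * (M + K) / δ) ^ θ) := by
  obtain ⟨g, hgc, hgd, hg⟩ := exists_log_quotient (by norm_num) hf h0
  have hc : c ∈ Metric.ball c (3 / 2) := Metric.mem_ball_self (by norm_num)
  have hfc0 := h0 c hc
  set G : ℂ → ℂ := fun w ↦ g (c + w) with hG
  have hball : ∀ w ∈ Metric.ball (0 : ℂ) (3 / 2), c + w ∈ Metric.ball c (3 / 2) := by
    intro w hw; simpa using hw
  have hGd : DifferentiableOn ℂ G (Metric.ball 0 (3 / 2)) := by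
    intro w hw
    have h1 : DifferentiableAt ℂ g (c + w) := (hgd _ (hball w hw)).differentiableAt
    exact (h1.comp w (differentiableAt_id.const_add c)).differentiableWithinAt
  have hre : Set.MapsTo G (Metric.ball 0 (3 / 2)) {w | w.re ≤ M + K} := by
    intro w hw
    have h1 : Complex.exp (G w) = (f c)⁻¹ * f (c + w) := by
      rw [hg _ (hball w hw)]; field_simp; rfl
    have h2 : Real.exp (G w).re ≤ Real.exp (M + K) := by
      rw [← Complex.norm_exp, h1, norm_mul, add_comm M K, Real.exp_add]
      exact mul_le_mul hfc (hfM _ (hball w hw)) (norm_nonneg _) (Real.exp_pos _).le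
    exact Real.exp_le_exp.mp h2
  have hA : ∀ w : ℂ, ‖w‖ = 1 / 2 → ‖G w‖ ≤ K := by
    intro w hw
    have := (convex_closedBall c (1 / 2)).norm_image_sub_le_of_norm_hasDerivWithin_le
      (f := g) (C := K) (x := c) (y := c + w)
      (fun x hx ↦ (hgd x (Metric.closedBall_subset_ball (by norm_num) hx)).hasDerivWithinAt) hfK
      (Metric.mem_closedBall_self (by norm_num)) (by simp [hw])
    rw [hgc, sub_zero, add_sub_cancel_left, hw] at this
    exact this.trans (by linarith)
  have hB : ∀ w : ℂ, ‖w‖ = 3 / 2 - δ → ‖G w‖ ≤ 3 * (M + K) / δ := by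
    intro w hw
    have := Complex.borelCaratheodory_zero (R := 3 / 2) (by linarith) hGd hre (by norm_num)
      (z := w) (by rw [mem_ball_zero_iff, hw]; linarith) (by simp [hG, hgc])
    rw [hw, sub_sub_cancel] at this
    refine this.trans ?_
    refine div_le_div_of_nonneg_right ?_ hδ.le
    nlinarith
  have h3 := three_circles (by norm_num) (by linarith) (by linarith) hGd hA hB
    (z := z - c) hz1 (by linarith)
  set τ := (Real.log ‖z - c‖ - Real.log (1 / 2)) / (Real.log (3 / 2 - δ) - Real.log (1 / 2)) with hτ
  have hlogpos : 0 < Real.log (3 / 2 - δ) - Real.log (1 / 2) :=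
    sub_pos.mpr (Real.log_lt_log (by norm_num) (by linarith))
  have hτθ : τ ≤ θ := by
    rw [hθ, hτ]
    gcongr
  have hGz : ‖G (z - c)‖ ≤ K ^ (1 - θ) * (3 * (M + K) / δ) ^ θ := by
    refine h3.trans ?_
    have hBK : K ≤ 3 * (M + K) / δ := by
      rw [le_div_iff₀ hδ]; nlinarith
    have hK0 : 0 < K := by linarith
    have hb0 : 0 < 3 * (M + K) / δ := hK0.trans_le hBK
    -- the bound is nondecreasing in the exponent, as it is `K` times a power of a ratio `≥ 1`
    have e : ∀ x : ℝ, K ^ (1 - x) * (3 * (M + K) / δ) ^ x = K * ((3 * (M + K) / δ) / K) ^ x := by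
      intro x
      rw [Real.div_rpow hb0.le hK0.le, Real.rpow_sub hK0, Real.rpow_one]
      ring
    rw [e, e]
    gcongr
    rw [one_le_div hK0]; exact hBK
  have hzb : z ∈ Metric.ball c (3 / 2) := by
    rw [mem_ball_iff_norm]; linarith
  have hfz : (f z)⁻¹ = (f c)⁻¹ * Complex.exp (-G (z - c)) := by
    rw [hg z hzb, mul_inv, Complex.exp_neg]; simp [hG]
  rw [hfz, norm_mul, Real.exp_add, Complex.norm_exp]
  refine mul_le_mul hfc (Real.exp_le_exp.mpr ?_) (Real.exp_pos _).le (Real.exp_pos _).le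
  refine le_trans ?_ hGz
  rw [Complex.neg_re]
  exact (neg_le_abs _).trans (Complex.abs_re_le_norm _)

/-! ### Littlewood's bound for the inverse of zeta -/

/-- The function `1/ζ`, with its correct value `0` at the pole `s = 1`. It is defined as
`(s - 1) / ((s - 1) ζ(s))` in order to be holomorphic at `1`. -/
noncomputable def invZeta (s : ℂ) : ℂ := (s - 1) / zetaMulSubOne s

theorem invZeta_of_ne {s : ℂ} (hs : s ≠ 1) : invZeta s = (riemannZeta s)⁻¹ := by
  have : s - 1 ≠ 0 := sub_ne_zero.mpr hs
  rw [invZeta, zetaMulSubOne_of_ne hs]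
  by_cases h : riemannZeta s = 0
  · simp [h]
  · field_simp

theorem invZeta_eq_LSeries {s : ℂ} (hs : 1 < s.re) :
    invZeta s = LSeries (fun n ↦ ((ArithmeticFunction.moebius n : ℤ) : ℂ)) s := by
  have hs1 : s ≠ 1 := by rintro rfl; simp at hs
  rw [invZeta_of_ne hs1]
  exact inv_eq_of_mul_eq_one_right (LSeries_moebius_eq hs)

theorem differentiableAt_invZeta (hRH : RiemannHypothesis) {s : ℂ} (hs : 1 / 2 < s.re) :
    DifferentiableAt ℂ invZeta s := by
  refine (differentiableAt_id.sub_const 1).div (differentiable_zetaMulSubOne s) ?_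
  rcases eq_or_ne s 1 with rfl | h1
  · simp [zetaMulSubOne_one]
  · rw [zetaMulSubOne_of_ne h1]
    exact mul_ne_zero (sub_ne_zero.mpr h1) (riemannZeta_ne_zero_of_riemannHypothesis hRH hs h1)

theorem norm_invZeta_le_const : ∃ S : ℝ, 0 ≤ S ∧ ∀ s : ℂ, 3 / 2 ≤ s.re → ‖invZeta s‖ ≤ S := by
  refine ⟨∑' n, ‖LSeries.term (fun n ↦ ((ArithmeticFunction.moebius n : ℤ) : ℂ)) (3 / 2 : ℝ) n‖,
    tsum_nonneg fun _ ↦ norm_nonneg _, fun s hs ↦ ?_⟩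
  rw [invZeta_eq_LSeries (by linarith)]
  exact norm_LSeries_le (ArithmeticFunction.LSeriesSummable_moebius_iff.mpr (by
    rw [Complex.ofReal_re]; norm_num)) hs

/-- `ζ'/ζ` is bounded on `3/2 ≤ re s`, being minus the Dirichlet series of the von Mangoldt function. -/
theorem norm_logDeriv_le_const :
    ∃ S : ℝ, 0 ≤ S ∧ ∀ s : ℂ, 3 / 2 ≤ s.re → ‖deriv riemannZeta s / riemannZeta s‖ ≤ S := by
  refine ⟨∑' n, ‖LSeries.term (fun n ↦ (ArithmeticFunction.vonMangoldt n : ℂ)) (3 / 2 : ℝ) n‖,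
    tsum_nonneg fun _ ↦ norm_nonneg _, fun s hs ↦ ?_⟩
  have h := ArithmeticFunction.LSeries_vonMangoldt_eq_deriv_riemannZeta_div (s := s) (by linarith)
  rw [← norm_neg, ← neg_div, ← h]
  exact norm_LSeries_le (ArithmeticFunction.LSeriesSummable_vonMangoldt (by
    rw [Complex.ofReal_re]; norm_num)) hs

/-- A sublinear power of an affine function is eventually below any positive multiple of `x`. -/
theorem eventually_rpow_le {θ : ℝ} (hθ : θ < 1) (K A a b : ℝ) (ha : 0 < a) {ε : ℝ} (hε : 0 < ε) :
    ∀ᶠ x : ℝ in atTop, K + A * (a * x + b) ^ θ ≤ ε * x := by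
  have hy : Tendsto (fun x : ℝ ↦ a * x + b) atTop atTop :=
    tendsto_atTop_add_const_right _ _ (tendsto_id.const_mul_atTop ha)
  have h1 : (fun x : ℝ ↦ (a * x + b) ^ θ) =o[atTop] (fun x : ℝ ↦ a * x + b) := by
    have hpow : (fun y : ℝ ↦ y ^ θ) =o[atTop] (fun y : ℝ ↦ y) := by
      refine (Asymptotics.isLittleO_iff_tendsto' ?_).mpr ?_
      · filter_upwards [eventually_gt_atTop 0] with y hy h using absurd h hy.ne'
      · refine (tendsto_rpow_neg_atTop (sub_pos.mpr hθ)).congr' ?_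
        filter_upwards [eventually_gt_atTop 0] with y hy
        rw [neg_sub, Real.rpow_sub hy, Real.rpow_one]
    have := hpow.comp_tendsto hy
    simpa [Function.comp_def] using this
  have h2 : (fun x : ℝ ↦ a * x + b) =O[atTop] (fun x : ℝ ↦ x) :=
    ((Asymptotics.isBigO_refl _ _).const_mul_left a).add
      (Asymptotics.isLittleO_const_id_atTop b).isBigO
  have h3 : (fun x : ℝ ↦ K + A * (a * x + b) ^ θ) =o[atTop] (fun x : ℝ ↦ x) :=
    (Asymptotics.isLittleO_const_id_atTop K).add ((h1.trans_isBigO h2).const_mul_left A)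
  filter_upwards [h3.bound hε, eventually_ge_atTop 0] with x hx hx0
  rw [Real.norm_of_nonneg hx0] at hx
  exact (Real.le_norm_self _).trans hx

/-- **Littlewood's bound**: under the Riemann hypothesis `1/ζ(s) = O(|im s|^ε)`, uniformly for
`1/2 + 2δ ≤ re s ≤ 3/2` and large `|im s|`. It is `norm_inv_le_of_disk` for the disk centred at
`2 + i im s`, where `M = log (28 |im s|)`; the exponent of the bound is `O((log |im s|)^θ)` with
`θ < 1`, which is at most `ε log |im s|`. -/
theorem norm_inv_riemannZeta_le (hRH : RiemannHypothesis) {δ : ℝ} (hδ : 0 < δ) (hδ' : δ ≤ 1 / 2)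
    {ε : ℝ} (hε : 0 < ε) :
    ∃ T : ℝ, 0 < T ∧ ∀ s : ℂ, 1 / 2 + 2 * δ ≤ s.re → s.re ≤ 3 / 2 → T ≤ |s.im| →
      ‖(riemannZeta s)⁻¹‖ ≤ |s.im| ^ ε := by
  obtain ⟨S₁, hS₁, h₁⟩ := norm_invZeta_le_const
  obtain ⟨S₂, hS₂, h₂⟩ := norm_logDeriv_le_const
  set K : ℝ := 1 + S₁ + S₂ with hKdef
  set θ : ℝ := (Real.log (3 / 2 - 2 * δ) - Real.log (1 / 2)) /
      (Real.log (3 / 2 - δ) - Real.log (1 / 2)) with hθ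
  have hden : 0 < Real.log (3 / 2 - δ) - Real.log (1 / 2) :=
    sub_pos.mpr (Real.log_lt_log (by norm_num) (by linarith))
  have hθ1 : θ < 1 := by
    rw [hθ, div_lt_one hden]
    gcongr
    · linarith
    · linarith
  have hev := eventually_rpow_le hθ1 K (K ^ (1 - θ)) (3 / δ) (3 / δ * (Real.log 28 + K))
    (by positivity) hε
  obtain ⟨T, hT⟩ := (Real.tendsto_log_atTop.eventually hev).exists_forall_of_atTop
  refine ⟨max T 3, by positivity, fun s hs hs' ht ↦ ?_⟩
  have ht3 : 3 ≤ |s.im| := (le_max_right _ _).trans ht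
  have ht0 : 0 < |s.im| := by linarith
  have hTt := hT _ ((le_max_left _ _).trans ht)
  set c : ℂ := ⟨2, s.im⟩ with hc
  have hre : ∀ z : ℂ, |z.re - 2| ≤ ‖z - c‖ := fun z ↦ by
    simpa [hc] using Complex.abs_re_le_norm (z - c)
  have him : ∀ z : ℂ, |z.im - s.im| ≤ ‖z - c‖ := fun z ↦ by
    simpa [hc] using Complex.abs_im_le_norm (z - c)
  have hb : ∀ z ∈ Metric.ball c (3 / 2), 1 / 2 < z.re ∧ z.re < 7 / 2 ∧ 1 ≤ |z.im| ∧
      |z.im| ≤ 2 * |s.im| := by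
    intro z hz
    rw [mem_ball_iff_norm] at hz
    have e1 := abs_lt.mp ((hre z).trans_lt hz)
    have e2 := (him z).trans_lt hz
    have e3 := abs_sub_abs_le_abs_sub s.im z.im
    have e4 := abs_sub_abs_le_abs_sub z.im s.im
    rw [abs_sub_comm] at e3
    exact ⟨by linarith, by linarith, by linarith, by linarith⟩
  have hne1 : ∀ z ∈ Metric.ball c (3 / 2), z ≠ 1 := by
    rintro z hz rfl
    have := (hb 1 hz).2.2.1
    simp at this
    linarith
  have hcb : c ∈ Metric.ball c (3 / 2) := Metric.mem_ball_self (by norm_num)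
  have hM : 0 ≤ Real.log (28 * |s.im|) := Real.log_nonneg (by linarith)
  have hnorm : ‖s - c‖ = 2 - s.re := by
    have : s - c = ((s.re - 2 : ℝ) : ℂ) := by
      apply Complex.ext <;> simp [hc]
    rw [this, Complex.norm_real, Real.norm_eq_abs, abs_of_nonpos (by linarith)]
    ring
  have key := norm_inv_le_of_disk (f := riemannZeta) (c := c) (δ := δ) (K := K)
    (M := Real.log (28 * |s.im|)) hδ hδ' (by linarith) hM
    (fun z hz ↦ (differentiableAt_riemannZeta (hne1 z hz)).differentiableWithinAt)
    (fun z hz ↦ riemannZeta_ne_zero_of_riemannHypothesis hRH (hb z hz).1 (hne1 z hz))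
    (fun z hz ↦ by
      obtain ⟨e1, e2, e3, e4⟩ := hb z hz
      rw [Real.exp_log (by positivity)]
      exact (norm_riemannZeta_le e1.le e2.le e3).trans (by linarith))
    (fun z hz ↦ by
      rw [mem_closedBall_iff_norm] at hz
      have e1 := abs_le.mp ((hre z).trans hz)
      exact (h₂ z (by linarith)).trans (by linarith))
    (by
      rw [← invZeta_of_ne (hne1 c hcb)]
      have := h₁ c (by simp [hc]; norm_num)
      have := Real.add_one_le_exp K
      linarith)
    hθ (z := s) (by rw [hnorm]; linarith) (by rw [hnorm]; linarith)
  refine key.trans ?_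
  rw [Real.rpow_def_of_pos ht0]
  refine Real.exp_le_exp.mpr ?_
  rw [mul_comm _ ε]
  refine le_trans (le_of_eq ?_) hTt
  rw [Real.log_mul (by norm_num) ht0.ne']
  congr 3
  ring

/-- Littlewood's bound on the whole strip `a ≤ re s ≤ 2`: bounded heights are dealt with by compactness
and `3/2 ≤ re s` by absolute convergence. -/
theorem norm_invZeta_le (hRH : RiemannHypothesis) {a : ℝ} (ha : 1 / 2 < a)
    {ε : ℝ} (hε : 0 < ε) :
    ∃ C : ℝ, 0 ≤ C ∧ ∀ s : ℂ, a ≤ s.re → s.re ≤ 2 → ‖invZeta s‖ ≤ C * (1 + |s.im|) ^ ε := by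
  obtain ⟨S, hS, hS'⟩ := norm_invZeta_le_const
  set δ : ℝ := min ((a - 1 / 2) / 2) (1 / 2) with hδ
  have hδ0 : 0 < δ := lt_min (by linarith) (by norm_num)
  have hδa : δ ≤ (a - 1 / 2) / 2 := min_le_left _ _
  obtain ⟨T, hT0, hT⟩ := norm_inv_riemannZeta_le hRH hδ0 (min_le_right _ _) hε
  have hcomp : IsCompact (Set.Icc a 2 ×ℂ Set.Icc (-T) T) := isCompact_Icc.reProdIm isCompact_Icc
  obtain ⟨C, hC⟩ := hcomp.exists_bound_of_continuousOn (f := invZeta) (fun z hz ↦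
    (differentiableAt_invZeta hRH (ha.trans_le hz.1.1)).continuousAt.continuousWithinAt)
  refine ⟨S + 1 + |C|, by positivity, fun s hs hs' ↦ ?_⟩
  have h1 : 1 ≤ (1 + |s.im|) ^ ε := Real.one_le_rpow (by linarith [abs_nonneg s.im]) hε.le
  have hC0 := abs_nonneg C
  rcases le_total (3 / 2) s.re with h32 | h32
  · exact (hS' s h32).trans (by nlinarith)
  rcases le_total T |s.im| with hTs | hTs
  · have hs1 : s ≠ 1 := by rintro rfl; simp at hTs; linarith
    rw [invZeta_of_ne hs1]
    refine (hT s (by linarith) h32 hTs).trans ?_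
    have : |s.im| ^ ε ≤ (1 + |s.im|) ^ ε := by gcongr; linarith
    nlinarith
  · have := hC s ⟨⟨hs, hs'⟩, abs_le.mp hTs⟩
    nlinarith [le_abs_self C]

/-! ### Integrals along vertical lines and the Riesz kernel -/

/-- The majorant `C (1 + |t|)^(-r)` used for every integral along a vertical line. -/
theorem integrable_one_add_abs_rpow {r : ℝ} (hr : 1 < r) (C : ℝ) :
    MeasureTheory.Integrable (fun t : ℝ ↦ C * (1 + |t|) ^ (-r)) := by
  have h := integrable_one_add_norm (E := ℝ) (μ := MeasureTheory.volume) (r := r) (by simpa using hr)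
  simpa only [Real.norm_eq_abs] using h.const_mul C

theorem integrable_vertical {f : ℂ → ℂ} {a C r : ℝ} (hr : 1 < r)
    (hd : ∀ s : ℂ, s.re = a → ContinuousAt f s)
    (hC : ∀ s : ℂ, s.re = a → ‖f s‖ ≤ C * (1 + |s.im|) ^ (-r)) :
    MeasureTheory.Integrable (fun t : ℝ ↦ f (a + t * Complex.I)) := by
  refine (integrable_one_add_abs_rpow hr C).mono' ?_ (MeasureTheory.ae_of_all _ fun t ↦ ?_)
  · refine Continuous.aestronglyMeasurable (continuous_iff_continuousAt.mpr fun t ↦ ?_)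
    exact ContinuousAt.comp (g := f) (hd _ (by simp)) (by fun_prop)
  · simpa using hC (a + t * Complex.I) (by simp)

/-- A vertical line of integration may be moved across a strip in which the function is holomorphic and
`O((1 + |im s|)^(-r))` with `r > 1`: Cauchy's theorem on the rectangle of height `2T`, whose
horizontal sides contribute `O(T^(-r))`. -/
theorem vertical_shift {f : ℂ → ℂ} {a b C r : ℝ} (hab : a ≤ b) (hr : 1 < r)
    (hd : ∀ s : ℂ, a ≤ s.re → s.re ≤ b → DifferentiableAt ℂ f s)
    (hC : ∀ s : ℂ, a ≤ s.re → s.re ≤ b → ‖f s‖ ≤ C * (1 + |s.im|) ^ (-r)) :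
    ∫ t : ℝ, f (a + t * Complex.I) = ∫ t : ℝ, f (b + t * Complex.I) := by
  have hlim : ∀ x : ℝ, a ≤ x → x ≤ b → Tendsto (fun T : ℝ ↦ ∫ t in (-T)..T, f (x + t * Complex.I))
      atTop (nhds (∫ t : ℝ, f (x + t * Complex.I))) := fun x hx hx' ↦
    MeasureTheory.intervalIntegral_tendsto_integral
      (integrable_vertical hr (fun s hs ↦ (hd s (by linarith) (by linarith)).continuousAt)
        (fun s hs ↦ hC s (by linarith) (by linarith))) tendsto_neg_atTop_atBot tendsto_id
  have hdiff := (hlim b hab le_rfl).sub (hlim a le_rfl hab)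
  have hzero : Tendsto (fun T : ℝ ↦ (∫ t in (-T)..T, f (b + t * Complex.I)) -
      ∫ t in (-T)..T, f (a + t * Complex.I)) atTop (nhds 0) := by
    have hbd : Tendsto (fun T : ℝ ↦ 2 * ((b - a) * (C * (1 + T) ^ (-r)))) atTop (nhds 0) := by
      have h1 : Tendsto (fun T : ℝ ↦ (1 + T) ^ (-r)) atTop (nhds 0) :=
        (tendsto_rpow_neg_atTop (by linarith)).comp (tendsto_atTop_add_const_left _ 1 tendsto_id)
      simpa using ((h1.const_mul C).const_mul (b - a)).const_mul 2
    refine squeeze_zero_norm' ?_ hbd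
    filter_upwards [eventually_ge_atTop 0] with T hT
    have hrect := Complex.integral_boundary_rect_eq_zero_of_differentiableOn f
      ⟨a, -T⟩ ⟨b, T⟩ (fun s hs ↦ by
        rw [Complex.mem_reProdIm, Set.uIcc_of_le hab] at hs
        exact (hd s hs.1.1 hs.1.2).differentiableWithinAt)
    simp only [smul_eq_mul] at hrect
    have hI : Complex.I * ((∫ t in (-T)..T, f (b + t * Complex.I)) -
        ∫ t in (-T)..T, f (a + t * Complex.I)) =
        (∫ x in a..b, f (x + T * Complex.I)) - ∫ x in a..b, f (x + (-T : ℝ) * Complex.I) := by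
      linear_combination hrect
    have hhor : ∀ y : ℝ, |y| = T → ‖∫ x in a..b, f (x + y * Complex.I)‖ ≤
        (b - a) * (C * (1 + T) ^ (-r)) := by
      intro y hy
      have := intervalIntegral.norm_integral_le_of_norm_le_const (a := a) (b := b)
        (f := fun x : ℝ ↦ f (x + y * Complex.I)) (C := C * (1 + T) ^ (-r)) (fun x hx ↦ by
          rw [Set.uIoc_of_le hab] at hx
          have := hC (x + y * Complex.I) (by simpa using hx.1.le) (by simpa using hx.2)
          simpa [hy] using this)
      rw [abs_of_nonneg (by linarith)] at this
      exact this.trans_eq (mul_comm _ _)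
    have hn : ‖(∫ t in (-T)..T, f (b + t * Complex.I)) -
        ∫ t in (-T)..T, f (a + t * Complex.I)‖ = ‖(∫ x in a..b, f (x + T * Complex.I)) -
          ∫ x in a..b, f (x + (-T : ℝ) * Complex.I)‖ := by
      rw [← hI, norm_mul, Complex.norm_I, one_mul]
    rw [hn, two_mul]
    exact (norm_sub_le _ _).trans (add_le_add (hhor T (abs_of_nonneg hT))
      (hhor (-T) (by rw [abs_neg, abs_of_nonneg hT])))
  exact (sub_eq_zero.mp (tendsto_nhds_unique hdiff hzero)).symm

theorem one_add_abs_im_le {s : ℂ} (hs : 1 / 2 ≤ s.re) :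
    1 + |s.im| ≤ 3 * ‖s‖ ∧ 1 + |s.im| ≤ 2 * ‖s + 1‖ := by
  have h1 := Complex.re_le_norm s
  have h2 := Complex.abs_im_le_norm s
  have h3 := Complex.re_le_norm (s + 1)
  have h4 := Complex.abs_im_le_norm (s + 1)
  simp at h3 h4
  constructor <;> linarith

theorem ne_zero_of_re {s : ℂ} (hs : 1 / 2 ≤ s.re) : s ≠ 0 ∧ s + 1 ≠ 0 := by
  constructor
  · rintro rfl; simp at hs; linarith
  · intro h
    have := congrArg Complex.re h
    simp at this
    linarith

theorem norm_kernel_le {s : ℂ} (hs : 1 / 2 ≤ s.re) :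
    ‖1 / (s * (s + 1))‖ ≤ 9 * (1 + |s.im|) ^ (-2 : ℝ) := by
  obtain ⟨h1, h2⟩ := one_add_abs_im_le hs
  have h0 : 0 < 1 + |s.im| := by positivity
  rw [norm_div, norm_one, norm_mul, Real.rpow_neg h0.le, Real.rpow_ofNat, ← div_eq_mul_inv]
  rw [div_le_div_iff₀ (mul_pos (by linarith) (by linarith)) (by positivity)]
  nlinarith

/-- The function `max (1 - t) 0` on `t > 0`, whose Mellin transform is the kernel `1/(s(s+1))`. It is
written as a difference of indicators to match the Mellin transforms of truncated powers. -/
noncomputable def tent (t : ℝ) : ℂ :=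
  (Set.Ioc (0 : ℝ) 1).indicator (fun _ ↦ 1) t -
    (Set.Ioc (0 : ℝ) 1).indicator (fun t : ℝ ↦ (t : ℂ) ^ (1 : ℂ)) t

theorem tent_eq {x : ℝ} (hx : 0 < x) : tent x = ((max (1 - x) 0 : ℝ) : ℂ) := by
  by_cases h : x ≤ 1
  · have hm : x ∈ Set.Ioc (0 : ℝ) 1 := ⟨hx, h⟩
    rw [tent, Set.indicator_of_mem hm, Set.indicator_of_mem hm, max_eq_left (by linarith)]
    simp
  · have hm : x ∉ Set.Ioc (0 : ℝ) 1 := fun h' ↦ h h'.2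
    rw [tent, Set.indicator_of_notMem hm, Set.indicator_of_notMem hm, max_eq_right (by linarith)]
    simp

theorem hasMellin_tent {s : ℂ} (hs : 1 / 2 ≤ s.re) : HasMellin tent s (1 / (s * (s + 1))) := by
  have h1 := hasMellin_one_Ioc (s := s) (by linarith)
  have h2 := hasMellin_cpow_Ioc 1 (s := s) (by simp; linarith)
  have h := hasMellin_sub h1.1 h2.1
  rw [h1.2, h2.2] at h
  obtain ⟨e1, e2⟩ := ne_zero_of_re hs
  have e : 1 / s - 1 / (s + 1) = 1 / (s * (s + 1)) := by
    field_simp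
    ring
  rw [e] at h
  exact h

theorem differentiableAt_kernel {s : ℂ} (hs : 1 / 2 ≤ s.re) :
    DifferentiableAt ℂ (fun s : ℂ ↦ 1 / (s * (s + 1))) s := by
  obtain ⟨e1, e2⟩ := ne_zero_of_re hs
  have : s * (s + 1) ≠ 0 := mul_ne_zero e1 e2
  fun_prop (disch := assumption)

/-- Mellin inversion for `tent` on the line `re s = 2`. -/
theorem integral_kernel {x : ℝ} (hx : 0 < x) :
    ∫ t : ℝ, (x : ℂ) ^ (-((2 : ℝ) + t * Complex.I)) *
      (1 / (((2 : ℝ) + t * Complex.I) * ((2 : ℝ) + t * Complex.I + 1))) =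
      2 * Real.pi * ((max (1 - x) 0 : ℝ) : ℂ) := by
  have hline : ∀ t : ℝ, mellin tent ((2 : ℝ) + t * Complex.I) =
      1 / (((2 : ℝ) + t * Complex.I) * ((2 : ℝ) + t * Complex.I + 1)) := fun t ↦
    (hasMellin_tent (by simp; norm_num)).2
  have hvi : Complex.VerticalIntegrable (mellin tent) (2 : ℝ) := by
    have := integrable_vertical (f := fun s : ℂ ↦ 1 / (s * (s + 1))) (a := 2) (C := 9) (r := 2)
      (by norm_num) (fun s hs ↦ (differentiableAt_kernel (by rw [hs]; norm_num)).continuousAt)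
      (fun s hs ↦ norm_kernel_le (by rw [hs]; norm_num))
    simpa only [Complex.VerticalIntegrable, hline] using this
  have hcont : ContinuousAt tent x := by
    have h : ContinuousAt (fun x : ℝ ↦ ((max (1 - x) 0 : ℝ) : ℂ)) x := by fun_prop
    refine h.congr ?_
    filter_upwards [isOpen_Ioi.mem_nhds hx] with y hy using (tent_eq hy).symm
  have h := mellinInv_mellin_eq (2 : ℝ) tent hx
    (hasMellin_tent (s := (2 : ℝ)) (by simp; norm_num)).1 hvi hcont
  rw [mellinInv, tent_eq hx] at h
  simp only [hline, smul_eq_mul, Complex.real_smul] at h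
  have hpi : (2 * Real.pi : ℂ) * ((1 / (2 * Real.pi) : ℝ) : ℂ) = 1 := by
    have : (Real.pi : ℂ) ≠ 0 := by exact_mod_cast Real.pi_ne_zero
    push_cast
    field_simp
  rw [← h, ← mul_assoc, hpi, one_mul]

/-! ### Perron's formula for Riesz means of the Möbius function -/

theorem integrable_cpow_kernel {x : ℝ} (hx : 0 < x) :
    MeasureTheory.Integrable (fun t : ℝ ↦ (x : ℂ) ^ (-((2 : ℝ) + t * Complex.I)) *
      (1 / (((2 : ℝ) + t * Complex.I) * ((2 : ℝ) + t * Complex.I + 1)))) := by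
  have hx' : (x : ℂ) ≠ 0 := by exact_mod_cast hx.ne'
  refine integrable_vertical (f := fun s : ℂ ↦ (x : ℂ) ^ (-s) * (1 / (s * (s + 1))))
    (C := x ^ (-2 : ℝ) * 9) (r := 2) (by norm_num) (fun s hs ↦ ?_) (fun s hs ↦ ?_)
  · have h1 : ContinuousAt (fun s : ℂ ↦ (x : ℂ) ^ (-s)) s :=
      (continuousAt_const_cpow hx').comp continuous_neg.continuousAt
    exact h1.mul (differentiableAt_kernel (by rw [hs]; norm_num)).continuousAt
  · rw [norm_mul, Complex.norm_cpow_eq_rpow_re_of_pos hx, Complex.neg_re, hs, mul_assoc]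
    exact mul_le_mul_of_nonneg_left (norm_kernel_le (by rw [hs]; norm_num)) (by positivity)

theorem cpow_mul_term {N : ℕ} (hN : 1 ≤ N) (n : ℕ) {s : ℂ} (f : ℕ → ℂ) (hf : f 0 = 0) :
    (N : ℂ) ^ (s + 1) * LSeries.term f s n =
      f n * N * (((n / N : ℝ) : ℝ) : ℂ) ^ (-s) := by
  rcases Nat.eq_zero_or_pos n with rfl | hn
  · simp [hf]
  have hN0 : (N : ℂ) ≠ 0 := by exact_mod_cast (by omega : N ≠ 0)
  have hn0 : (n : ℂ) ≠ 0 := by exact_mod_cast hn.ne'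
  rw [LSeries.term_of_ne_zero hn.ne', Complex.cpow_add _ _ hN0, Complex.cpow_one]
  have h : (((n / N : ℝ) : ℝ) : ℂ) ^ (-s) = (N : ℂ) ^ s / (n : ℂ) ^ s := by
    have e : (n : ℂ) = ((n / N : ℝ) : ℂ) * ((N : ℝ) : ℂ) := by
      push_cast; field_simp
    have h2 : (n : ℂ) ^ s = ((n / N : ℝ) : ℂ) ^ s * (N : ℂ) ^ s := by
      conv_lhs => rw [e, Complex.mul_cpow_ofReal_nonneg (by positivity) (by positivity)]
      simp
    have h3 : (N : ℂ) ^ s ≠ 0 := by simp [Complex.cpow_eq_zero_iff, hN0]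
    rw [Complex.cpow_neg, h2]
    field_simp
  rw [h]
  ring

/-- The function `N^(s+1) / (s(s+1) ζ(s))`, whose integral along `re s = 2` is `2π` times the Riesz mean
`∑_{n ≤ N} μ(n) (N - n)`. -/
noncomputable def perronIntegrand (N : ℕ) (s : ℂ) : ℂ :=
  (N : ℂ) ^ (s + 1) * (1 / (s * (s + 1))) * invZeta s

/-- Perron's formula for the first Riesz mean of the Möbius function, by termwise integration of the
Dirichlet series of `1/ζ`. -/
theorem integral_perronIntegrand {N : ℕ} (hN : 1 ≤ N) :
    ∫ t : ℝ, perronIntegrand N ((2 : ℝ) + t * Complex.I) =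
      2 * Real.pi * ∑ n ∈ Icc 1 N, ((ArithmeticFunction.moebius n : ℤ) : ℂ) * (N - n) := by
  have hNpos : (0 : ℝ) < N := by exact_mod_cast hN
  set f : ℕ → ℂ := fun n ↦ ((ArithmeticFunction.moebius n : ℤ) : ℂ) with hf
  have hf0 : f 0 = 0 := by simp [hf]
  -- `G n t` is the `n`-th term of the Dirichlet series times the kernel, with the powers of `n` and
  -- `N` combined into a power of `n / N` so that `integral_kernel` applies
  set G : ℕ → ℝ → ℂ := fun n t ↦ f n * N * ((((n / N : ℝ) : ℝ) : ℂ) ^ (-((2 : ℝ) + t * Complex.I)) *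
      (1 / (((2 : ℝ) + t * Complex.I) * ((2 : ℝ) + t * Complex.I + 1)))) with hG
  have hGint : ∀ n, MeasureTheory.Integrable (G n) := by
    intro n
    rcases Nat.eq_zero_or_pos n with rfl | hn
    · simp [hG, hf0]
    · have : (0 : ℝ) < n := by exact_mod_cast hn
      exact (integrable_cpow_kernel (x := n / N) (by positivity)).const_mul _
  have hGval : ∀ n, ∫ t, G n t = 2 * Real.pi * (f n * ((max (N - n) 0 : ℝ) : ℂ)) := by
    intro n
    rcases Nat.eq_zero_or_pos n with rfl | hn
    · simp [hG, hf0]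
    · have hn' : (0 : ℝ) < n := by exact_mod_cast hn
      rw [hG, MeasureTheory.integral_const_mul, integral_kernel (x := n / N) (by positivity)]
      have : max ((N : ℝ) - n) 0 = N * max (1 - (n : ℝ) / N) 0 := by
        rw [mul_max_of_nonneg _ _ hNpos.le]
        field_simp
        simp
      rw [this, Complex.ofReal_mul, Complex.ofReal_natCast]
      ring
  have hGnorm : ∀ n, ∫ t, ‖G n t‖ ≤ ‖LSeries.term f (2 : ℝ) n‖ *
      ((N : ℝ) ^ (3 : ℝ) * ∫ t : ℝ, ‖1 / ((((2 : ℝ) : ℂ) + t * Complex.I) * ((2 : ℝ) + t * Complex.I + 1))‖) := by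
    intro n
    refine le_of_eq ?_
    rw [← mul_assoc, ← MeasureTheory.integral_const_mul]
    congr 1
    funext t
    have hre : ((2 : ℝ) + t * Complex.I : ℂ).re = 2 := by simp
    rw [hG]
    simp only
    rw [← mul_assoc, norm_mul, ← cpow_mul_term hN n f hf0, norm_mul,
      Complex.norm_natCast_cpow_of_pos (by omega), LSeries.norm_term_eq, LSeries.norm_term_eq]
    simp only [Complex.add_re, hre, Complex.one_re, Complex.ofReal_re]
    norm_num
    ring_nf
  have hsummable : LSeriesSummable f (2 : ℝ) :=
    ArithmeticFunction.LSeriesSummable_moebius_iff.mpr (by simp)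
  have hsum : Summable fun n ↦ ∫ t, ‖G n t‖ :=
    Summable.of_nonneg_of_le (fun n ↦ MeasureTheory.integral_nonneg fun t ↦ norm_nonneg _)
      hGnorm (hsummable.norm.mul_right _)
  have hmain := MeasureTheory.hasSum_integral_of_summable_integral_norm hGint hsum
  have hpt : ∀ t : ℝ, ∑' n, G n t = perronIntegrand N ((2 : ℝ) + t * Complex.I) := by
    intro t
    rw [perronIntegrand, invZeta_eq_LSeries (by simp), LSeries, ← tsum_mul_left]
    congr 1
    funext n
    rw [hG]
    simp only
    rw [← mul_assoc, ← cpow_mul_term hN n f hf0]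
    ring
  simp only [hpt] at hmain
  have hfin : HasSum (fun n ↦ ∫ t, G n t) (∑ n ∈ Icc 1 N, ∫ t, G n t) := by
    refine hasSum_sum_of_ne_finset_zero fun n hn ↦ ?_
    rw [hGval]
    rcases Nat.eq_zero_or_pos n with rfl | h0
    · simp [hf0]
    · have : N < n := by
        by_contra! h
        exact hn (Finset.mem_Icc.mpr ⟨h0, h⟩)
      have : (N : ℝ) < n := by exact_mod_cast this
      rw [max_eq_right (by linarith)]
      simp
  rw [hmain.unique hfin, Finset.mul_sum]
  refine Finset.sum_congr rfl fun n hn ↦ ?_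
  have : (n : ℝ) ≤ N := by exact_mod_cast (Finset.mem_Icc.mp hn).2
  rw [hGval, max_eq_left (by linarith)]
  push_cast
  ring

/-- The Mertens function is an exact difference of consecutive Riesz means. -/
theorem mertens_eq_sub (N : ℕ) :
    (mertens N : ℂ) = (∑ n ∈ Icc 1 (N + 1), ((ArithmeticFunction.moebius n : ℤ) : ℂ) *
      ((N + 1 : ℕ) - n)) - ∑ n ∈ Icc 1 N, ((ArithmeticFunction.moebius n : ℤ) : ℂ) * (N - n) := by
  rw [Finset.sum_Icc_succ_top (by omega), sub_self, mul_zero, add_zero, ← Finset.sum_sub_distrib,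
    mertens]
  push_cast
  refine Finset.sum_congr rfl fun n _ ↦ ?_
  ring

/-! ### From the Riemann hypothesis to the bound on the Mertens function -/

/-- Under the Riemann hypothesis the Perron integrand satisfies the hypotheses of `vertical_shift`. -/
theorem perronIntegrand_strip (hRH : RiemannHypothesis) {a : ℝ} (ha : 1 / 2 < a) {N : ℕ}
    (hN : 1 ≤ N) :
    (∀ s : ℂ, a ≤ s.re → s.re ≤ 2 → DifferentiableAt ℂ (perronIntegrand N) s) ∧
    ∃ C, ∀ s : ℂ, a ≤ s.re → s.re ≤ 2 →
      ‖perronIntegrand N s‖ ≤ C * (1 + |s.im|) ^ (-(3 / 2) : ℝ) := by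
  have hN0 : (N : ℂ) ≠ 0 := by exact_mod_cast (by omega : N ≠ 0)
  have hN1 : (1 : ℝ) ≤ N := by exact_mod_cast hN
  constructor
  · intro s hs _
    have h1 : DifferentiableAt ℂ (fun s : ℂ ↦ (N : ℂ) ^ (s + 1)) s :=
      DifferentiableAt.const_cpow (by fun_prop) (Or.inl hN0)
    exact (h1.mul (differentiableAt_kernel (by linarith))).mul
      (differentiableAt_invZeta hRH (by linarith))
  · obtain ⟨C, hC0, hC⟩ := norm_invZeta_le hRH ha (ε := 1 / 2) (by norm_num)
    refine ⟨(N : ℝ) ^ (3 : ℝ) * 9 * C, fun s hs hs' ↦ ?_⟩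
    have hu : 0 < 1 + |s.im| := by positivity
    rw [perronIntegrand, norm_mul, norm_mul, Complex.norm_natCast_cpow_of_pos (by omega)]
    calc (N : ℝ) ^ (s + 1).re * ‖1 / (s * (s + 1))‖ * ‖invZeta s‖
        ≤ (N : ℝ) ^ (3 : ℝ) * (9 * (1 + |s.im|) ^ (-2 : ℝ)) *
          (C * (1 + |s.im|) ^ (1 / 2 : ℝ)) := by
          gcongr
          · simp only [Complex.add_re, Complex.one_re]; linarith
          · exact norm_kernel_le (by linarith)
          · exact hC s hs hs'
      _ = (N : ℝ) ^ (3 : ℝ) * 9 * C * ((1 + |s.im|) ^ (-2 : ℝ) * (1 + |s.im|) ^ (1 / 2 : ℝ)) := by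
          ring
      _ = _ := by rw [← Real.rpow_add hu]; norm_num

/-- The Mertens function as an integral along any line `re s = a` with `1/2 < a ≤ 2`. -/
theorem two_pi_mul_mertens (hRH : RiemannHypothesis) {a : ℝ} (ha : 1 / 2 < a) (ha2 : a ≤ 2)
    {N : ℕ} (hN : 1 ≤ N) :
    2 * Real.pi * (mertens N : ℂ) = ∫ t : ℝ, (perronIntegrand (N + 1) (a + t * Complex.I) -
      perronIntegrand N (a + t * Complex.I)) := by
  have key : ∀ K : ℕ, 1 ≤ K →
      MeasureTheory.Integrable (fun t : ℝ ↦ perronIntegrand K (a + t * Complex.I)) ∧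
      ∫ t : ℝ, perronIntegrand K (a + t * Complex.I) =
        2 * Real.pi * ∑ n ∈ Icc 1 K, ((ArithmeticFunction.moebius n : ℤ) : ℂ) * (K - n) := by
    intro K hK
    obtain ⟨hd, C, hC⟩ := perronIntegrand_strip hRH ha hK
    refine ⟨integrable_vertical (r := 3 / 2) (by norm_num)
      (fun s hs ↦ (hd s (by linarith) (by linarith)).continuousAt)
      (fun s hs ↦ hC s (by linarith) (by linarith)), ?_⟩
    rw [vertical_shift (r := 3 / 2) ha2 (by norm_num) hd hC, integral_perronIntegrand hK]
  rw [MeasureTheory.integral_sub (key (N + 1) (by omega)).1 (key N hN).1,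
    (key (N + 1) (by omega)).2, (key N hN).2, mertens_eq_sub]
  ring

/-- Two bounds for `(N+1)^(s+1) - N^(s+1)`: the mean value inequality, good for small `|s|`, and the
triangle inequality, good for large `|s|`. -/
theorem norm_cpow_sub_cpow_le {N : ℕ} (hN : 1 ≤ N) {s : ℂ} (hs : 0 ≤ s.re) :
    ‖((N + 1 : ℕ) : ℂ) ^ (s + 1) - (N : ℂ) ^ (s + 1)‖ ≤ ‖s + 1‖ * (N + 1 : ℝ) ^ s.re ∧
    ‖((N + 1 : ℕ) : ℂ) ^ (s + 1) - (N : ℂ) ^ (s + 1)‖ ≤ 2 * (N + 1 : ℝ) ^ (s.re + 1) := by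
  have hN1 : (1 : ℝ) ≤ N := by exact_mod_cast hN
  have hs1 : s + 1 ≠ 0 := by
    intro h
    have := congrArg Complex.re h
    simp at this
    linarith
  constructor
  · have := (convex_Icc (N : ℝ) (N + 1)).norm_image_sub_le_of_norm_hasDerivWithin_le
      (f := fun y : ℝ ↦ (y : ℂ) ^ (s + 1)) (f' := fun y : ℝ ↦ (s + 1) * (y : ℂ) ^ s)
      (C := ‖s + 1‖ * (N + 1 : ℝ) ^ s.re) (x := (N : ℝ)) (y := (N + 1 : ℝ))
      (fun y hy ↦ by
        have hy0 : y ≠ 0 := by have := hy.1; intro h; linarith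
        have h := hasDerivAt_ofReal_cpow_const (x := y) (r := s + 1) hy0 hs1
        rw [add_sub_cancel_right] at h
        exact h.hasDerivWithinAt)
      (fun y hy ↦ by
        have hy0 : 0 < y := by have := hy.1; linarith
        rw [norm_mul, Complex.norm_cpow_eq_rpow_re_of_pos hy0]
        gcongr
        exact hy.2)
      (by simp) (by simp)
    simpa using this
  · refine (norm_sub_le _ _).trans ?_
    rw [Complex.norm_natCast_cpow_of_pos (by omega), Complex.norm_natCast_cpow_of_pos (by omega),
      two_mul]
    simp only [Complex.add_re, Complex.one_re]
    push_cast
    gcongr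
    linarith

/-- Geometric interpolation, with weight `θ`, between the two bounds of `norm_cpow_sub_cpow_le`: a factor
`(N+1)^θ` is lost, and an absolutely convergent decay `(1 + |im s|)^(-1-θ)` is gained. -/
theorem norm_perronIntegrand_sub_le {N : ℕ} (hN : 1 ≤ N) {s : ℂ} (hs : 1 / 2 ≤ s.re) {θ : ℝ}
    (hθ : 0 ≤ θ) (hθ1 : θ ≤ 1) :
    ‖perronIntegrand (N + 1) s - perronIntegrand N s‖ ≤
      12 * (N + 1 : ℝ) ^ (s.re + θ) * (1 + |s.im|) ^ (-(1 + θ)) * ‖invZeta s‖ := by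
  set X : ℝ := N + 1 with hX
  have hX0 : 0 < X := by positivity
  obtain ⟨h1, h2⟩ := norm_cpow_sub_cpow_le hN (s := s) (by linarith)
  obtain ⟨u1, u2⟩ := one_add_abs_im_le hs
  set D := ‖((N + 1 : ℕ) : ℂ) ^ (s + 1) - (N : ℂ) ^ (s + 1)‖ with hD
  set u := 1 + |s.im| with hu
  have hu0 : 0 < u := by positivity
  have hw : 0 < ‖s + 1‖ := by linarith
  have hs0 : 0 < ‖s‖ := by linarith
  have hDle : D ≤ 2 * X ^ (s.re + θ) * ‖s + 1‖ ^ (1 - θ) := by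
    calc D = D ^ (1 - θ) * D ^ θ := by
          rw [← Real.rpow_add_of_nonneg (norm_nonneg _) (by linarith) hθ, sub_add_cancel, Real.rpow_one]
      _ ≤ (‖s + 1‖ * X ^ s.re) ^ (1 - θ) * (2 * X ^ (s.re + 1)) ^ θ := by
          have : 0 ≤ D := norm_nonneg _
          have : 0 ≤ 1 - θ := by linarith
          gcongr
      _ = 2 ^ θ * (X ^ (s.re * (1 - θ)) * X ^ ((s.re + 1) * θ)) * ‖s + 1‖ ^ (1 - θ) := by
          rw [Real.mul_rpow (by positivity) (by positivity),
            Real.mul_rpow (by positivity) (by positivity), Real.rpow_mul hX0.le,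
            Real.rpow_mul hX0.le]
          ring
      _ = 2 ^ θ * X ^ (s.re + θ) * ‖s + 1‖ ^ (1 - θ) := by
          rw [← Real.rpow_add hX0]; ring_nf
      _ ≤ _ := by
          gcongr
          calc (2 : ℝ) ^ θ ≤ 2 ^ (1 : ℝ) := Real.rpow_le_rpow_of_exponent_le (by norm_num) hθ1
            _ = 2 := by norm_num
  have hk : ‖s + 1‖ ^ (1 - θ) / (‖s‖ * ‖s + 1‖) ≤ 6 * u ^ (-(1 + θ)) := by
    have e1 : ‖s + 1‖ ^ (1 - θ) / (‖s‖ * ‖s + 1‖) = ‖s‖⁻¹ * ‖s + 1‖ ^ (-θ) := by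
      rw [sub_eq_add_neg, Real.rpow_add hw, Real.rpow_one]
      field_simp
    have e2 : ‖s + 1‖ ^ (-θ) ≤ 2 * u ^ (-θ) := by
      calc ‖s + 1‖ ^ (-θ) ≤ (u / 2) ^ (-θ) :=
            Real.rpow_le_rpow_of_nonpos (by positivity) (by linarith) (by linarith)
        _ = 2 ^ θ * u ^ (-θ) := by
            rw [Real.div_rpow hu0.le (by norm_num), Real.rpow_neg (by norm_num : (0:ℝ) ≤ 2)]
            field_simp
        _ ≤ 2 ^ (1 : ℝ) * u ^ (-θ) := by
            gcongr
            norm_num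
        _ = _ := by norm_num
    have e3 : ‖s‖⁻¹ ≤ 3 * u⁻¹ := by
      rw [← div_eq_mul_inv, inv_eq_one_div, div_le_div_iff₀ hs0 hu0]
      linarith
    rw [e1, neg_add, Real.rpow_add hu0, Real.rpow_neg_one]
    calc ‖s‖⁻¹ * ‖s + 1‖ ^ (-θ) ≤ (3 * u⁻¹) * (2 * u ^ (-θ)) := by gcongr
      _ = _ := by ring
  have e : perronIntegrand (N + 1) s - perronIntegrand N s =
      (((N + 1 : ℕ) : ℂ) ^ (s + 1) - (N : ℂ) ^ (s + 1)) / (s * (s + 1)) * invZeta s := by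
    rw [perronIntegrand, perronIntegrand]; ring
  rw [e, norm_mul, norm_div, norm_mul s, ← hD]
  refine mul_le_mul_of_nonneg_right ?_ (norm_nonneg _)
  calc D / (‖s‖ * ‖s + 1‖) ≤ 2 * X ^ (s.re + θ) * ‖s + 1‖ ^ (1 - θ) / (‖s‖ * ‖s + 1‖) := by gcongr
    _ = 2 * X ^ (s.re + θ) * (‖s + 1‖ ^ (1 - θ) / (‖s‖ * ‖s + 1‖)) := by ring
    _ ≤ 2 * X ^ (s.re + θ) * (6 * u ^ (-(1 + θ))) := by gcongr
    _ = _ := by ring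

/-- The line `re s = 1/2 + η`, with interpolation weight `η` and Littlewood's exponent `η/2`, gives
`M(N) = O(N^(1/2+2η))`: the integrand decays like `(1 + |t|)^(-1-η/2)`. -/
theorem mertens_le (hRH : RiemannHypothesis) {η : ℝ} (hη : 0 < η) (hη1 : η ≤ 1) :
    ∃ C, 0 ≤ C ∧ ∀ N : ℕ, 1 ≤ N → |(mertens N : ℝ)| ≤ C * (N + 1 : ℝ) ^ (1 / 2 + 2 * η) := by
  obtain ⟨C, hC0, hC⟩ := norm_invZeta_le hRH (a := 1 / 2 + η) (by linarith) (ε := η / 2)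
    (by linarith)
  set J := ∫ t : ℝ, 12 * C * (1 + |t|) ^ (-(1 + η / 2)) with hJ
  have hJ0 : 0 ≤ J := MeasureTheory.integral_nonneg fun t ↦ by positivity
  refine ⟨J, hJ0, fun N hN ↦ ?_⟩
  have hint := (integrable_one_add_abs_rpow (r := 1 + η / 2) (by linarith) (12 * C)).const_mul
    ((N + 1 : ℝ) ^ (1 / 2 + 2 * η))
  have h := two_pi_mul_mertens hRH (a := 1 / 2 + η) (by linarith) (by linarith) hN
  have hb := MeasureTheory.norm_integral_le_of_norm_le
    (f := fun t : ℝ ↦ perronIntegrand (N + 1) ((1 / 2 + η : ℝ) + t * Complex.I) -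
      perronIntegrand N ((1 / 2 + η : ℝ) + t * Complex.I)) hint
    (MeasureTheory.ae_of_all _ fun t ↦ by
      have hre : (((1 / 2 + η : ℝ) : ℂ) + t * Complex.I).re = 1 / 2 + η := by simp
      have him : (((1 / 2 + η : ℝ) : ℂ) + t * Complex.I).im = t := by simp
      have h1 := norm_perronIntegrand_sub_le hN (s := (1 / 2 + η : ℝ) + t * Complex.I)
        (by rw [hre]; linarith) hη.le hη1
      have h2 := hC ((1 / 2 + η : ℝ) + t * Complex.I) (by rw [hre]) (by rw [hre]; linarith)
      rw [him] at h1 h2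
      rw [hre] at h1
      have hu : 0 < 1 + |t| := by positivity
      refine h1.trans ((mul_le_mul_of_nonneg_left h2 (by positivity)).trans_eq ?_)
      have e : (1 + |t|) ^ (-(1 + η / 2)) = (1 + |t|) ^ (-(1 + η)) * (1 + |t|) ^ (η / 2) := by
        rw [← Real.rpow_add hu]; ring_nf
      rw [e, show 1 / 2 + η + η = 1 / 2 + 2 * η by ring]
      ring)
  rw [← h, MeasureTheory.integral_const_mul, ← hJ] at hb
  have hn : ‖2 * Real.pi * (mertens N : ℂ)‖ = 2 * Real.pi * |(mertens N : ℝ)| := by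
    rw [norm_mul, norm_mul, Complex.norm_intCast, Complex.norm_real, Real.norm_eq_abs,
      abs_of_pos Real.pi_pos]
    simp
  rw [hn] at hb
  have hpi := Real.pi_gt_three
  nlinarith [abs_nonneg (mertens N : ℝ)]

theorem isBigO_of_riemannHypothesis (hRH : RiemannHypothesis) {ε : ℝ} (hε : 0 < ε) :
    (fun X : ℕ => (mertens X : ℝ)) =O[atTop] (fun X : ℕ => (X : ℝ) ^ ((1 : ℝ) / 2 + ε)) := by
  set η := min (ε / 2) 1 with hη
  have hη0 : 0 < η := lt_min (by linarith) one_pos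
  have hη2 : 2 * η ≤ ε := by linarith [min_le_left (ε / 2) 1]
  obtain ⟨C, hC0, hC⟩ := mertens_le hRH hη0 (min_le_right _ _)
  refine Asymptotics.IsBigO.of_bound (C * 2 ^ (1 / 2 + ε)) ?_
  filter_upwards [eventually_ge_atTop 1] with N hN
  have hN1 : (1 : ℝ) ≤ N := by exact_mod_cast hN
  rw [Real.norm_eq_abs, Real.norm_of_nonneg (by positivity), mul_assoc,
    ← Real.mul_rpow (by norm_num) (by positivity)]
  refine (hC N hN).trans (mul_le_mul_of_nonneg_left ?_ hC0)
  calc (N + 1 : ℝ) ^ (1 / 2 + 2 * η) ≤ (N + 1 : ℝ) ^ (1 / 2 + ε) :=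
        Real.rpow_le_rpow_of_exponent_le (by linarith) (by linarith)
    _ ≤ _ := Real.rpow_le_rpow (by positivity) (by linarith) (by linarith)

/-- The Riemann hypothesis holds if and only if `M(X) = O(X^{1/2 + ε})` for every `ε > 0`. -/
theorem riemannHypothesis_iff_mertens_bound :
    RiemannHypothesis ↔
      ∀ ε : ℝ, 0 < ε →
        (fun X : ℕ => (mertens X : ℝ)) =O[atTop]
          (fun X : ℕ => (X : ℝ) ^ ((1 : ℝ) / 2 + ε)) :=
  ⟨fun hRH _ hε ↦ isBigO_of_riemannHypothesis hRH hε, fun h ↦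
    riemannHypothesis_of_ne_zero fun _ hs hs1 ↦ riemannZeta_ne_zero_of_mertens_bound h hs hs1⟩
end
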